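/- arXiv:2209.12718 — 2 statements merged into one kernel-verified Lean document; each statement's English description precedes it below -/
import Mathlib

section
/- Let (R, m) be a Noetherian local ring. Then R satisfies (SAC) if and only if the m-adic completion R̂ satisfies (SAC). -/
open CategoryTheory

/-- The `i`-th Ext group of `R`-modules `M` and `N`. -/
noncomputable abbrev ExtGroup (R : Type) [CommRing R] (M N : ModuleCat.{0} R) (i : ℕ) : Type :=
  (((Ext R (ModuleCat.{0} R) i).obj (Opposite.op M)).obj N)

/-- The symmetric Auslander condition (SAC): for every finitely generated `R`-module `M`,
if `Ext^i(M,R) = 0` for all `i > 0` and `Ext^i(M,M) = 0` for `i ≫ 0`,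
then `Ext^i(M,M) = 0` for all `i > 0`. -/
def SAC (R : Type) [CommRing R] : Prop :=
  ∀ M : ModuleCat.{0} R, Module.Finite R M →
    (∀ i : ℕ, 0 < i → Subsingleton (ExtGroup R M (ModuleCat.of R R) i)) →
    (∃ N : ℕ, ∀ i : ℕ, N < i → Subsingleton (ExtGroup R M M i)) →
    ∀ i : ℕ, 0 < i → Subsingleton (ExtGroup R M M i)

/-!
Faithfully flat base change preserves and reflects the vanishing of `Ext` between finitely
generated modules over Noetherian rings, so (SAC) descends from the completion to the ring.

For the ascent, let `A → B` be faithfully flat such that `A → B ⧸ xB` is surjective and `x` lies in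
the Jacobson radical of `B`. A finitely generated `B`-module `M` need not be extended from `A`, but
for a finite free cover `π : F → M` the pullback `X = {(v, m) | π v = x m}` is, because `x` kills
the kernel of `X → F`. The sequence `0 → X → F × M → M → 0`, whose last map is
`(v, m) ↦ π v - x m`, transfers the vanishing of `Ext` from `M` to `X`, and together with
Nakayama's lemma it transfers it back. The completion is reached by adjoining one generator `x` of
the ideal at a time: if `S` is `J`-adically complete and `T` is its completion at `J + (x)`, then
`S → T ⧸ xT` is surjective.
-/

universe w v u

open Abelian TensorProduct

section AbelianCategory

variable {C : Type u} [Category.{v} C] [Abelian C]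

theorem subsingleton_derivedExt_succ_iff {R : Type*} [Ring R] [Linear R C]
    [EnoughProjectives C] [HasExt.{w} C] (X Y : C) (n : ℕ) :
    Subsingleton (((_root_.Ext R C (n + 1)).obj (Opposite.op X)).obj Y) ↔
      Subsingleton (Abelian.Ext X Y (n + 1)) := by
  let P := projectiveResolution X
  have derivedExt_iff_cocycles :
      Subsingleton (((_root_.Ext R C (n + 1)).obj (Opposite.op X)).obj Y) ↔
      ∀ f : P.complex.X (n + 1) ⟶ Y, P.complex.d (n + 2) (n + 1) ≫ f = 0 →
        ∃ g : P.complex.X n ⟶ Y, P.complex.d (n + 1) n ≫ g = f := by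
    rw [← ModuleCat.isZero_iff_subsingleton, (P.isoExt (R := R) (n + 1) Y).isZero_iff,
      ← HomologicalComplex.exactAt_iff_isZero_homology,
      HomologicalComplex.exactAt_iff' _ n (n + 1) (n + 2) (by simp) (by simp),
      ShortComplex.moduleCat_exact_iff]
    rfl
  rw [derivedExt_iff_cocycles]
  constructor
  · refine fun h => subsingleton_of_forall_eq 0 fun a => ?_
    obtain ⟨f, hf, rfl⟩ := P.extMk_surjective a (n + 2) rfl
    exact (P.extMk_eq_zero_iff _ _ _ _ n rfl).2 (h f hf)
  · exact fun _ f hf => (P.extMk_eq_zero_iff _ _ rfl hf n rfl).1 (Subsingleton.elim _ _)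

variable [HasExt.{w} C]

/-- Vanishing of `Ext^i(X, Y)` in all degrees `i > k`. -/
def ExtVanishesAbove (X Y : C) (k : ℕ) : Prop :=
  ∀ i : ℕ, k < i → Subsingleton (Abelian.Ext X Y i)

namespace ExtVanishesAbove

theorem mono {X Y : C} {k l : ℕ} (h : ExtVanishesAbove X Y k) (hkl : k ≤ l) :
    ExtVanishesAbove X Y l :=
  fun i hi => h i (hkl.trans_lt hi)

theorem of_projective (X Y : C) [Projective X] (k : ℕ) : ExtVanishesAbove X Y k := by
  rintro (_ | i) hi
  · lia
  · exact subsingleton_of_forall_eq 0 Ext.eq_zero_of_projective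

theorem of_iso {X X' Y Y' : C} {k : ℕ} (e : X ≅ X') (f : Y ≅ Y') (h : ExtVanishesAbove X Y k) :
    ExtVanishesAbove X' Y' k := by
  refine fun i hi => subsingleton_of_forall_eq 0 fun a => ?_
  have := h i hi
  let b := ((Ext.mk₀ e.hom).comp a (zero_add i)).comp (Ext.mk₀ f.inv) (add_zero i)
  calc a = (Ext.mk₀ e.inv).comp (b.comp (Ext.mk₀ f.hom) (add_zero i)) (zero_add i) := by simp [b]
    _ = 0 := by simp [Subsingleton.elim b 0]

variable {S : ShortComplex C} {X Y : C} {k : ℕ}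

theorem contravariant_X₁ (hS : S.ShortExact) (h₂ : ExtVanishesAbove S.X₂ Y k)
    (h₃ : ExtVanishesAbove S.X₃ Y (k + 1)) : ExtVanishesAbove S.X₁ Y k := by
  refine fun i hi => subsingleton_of_forall_eq 0 fun a => ?_
  have := h₂ i hi
  have := h₃ (1 + i) (by lia)
  obtain ⟨b, rfl⟩ := Ext.contravariant_sequence_exact₁ hS Y a rfl (Subsingleton.elim _ _)
  rw [Subsingleton.elim b 0, Ext.comp_zero]

theorem contravariant_X₂ (hS : S.ShortExact) (h₁ : ExtVanishesAbove S.X₁ Y k)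
    (h₃ : ExtVanishesAbove S.X₃ Y k) : ExtVanishesAbove S.X₂ Y k := by
  refine fun i hi => subsingleton_of_forall_eq 0 fun a => ?_
  have := h₁ i hi
  have := h₃ i hi
  obtain ⟨b, rfl⟩ := Ext.contravariant_sequence_exact₂ hS Y a (Subsingleton.elim _ _)
  rw [Subsingleton.elim b 0, Ext.comp_zero]

theorem covariant_X₁ (hS : S.ShortExact) (h₂ : ExtVanishesAbove X S.X₂ (k + 1))
    (h₃ : ExtVanishesAbove X S.X₃ k) : ExtVanishesAbove X S.X₁ (k + 1) := by
  rintro (_ | i) hi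
  · lia
  refine subsingleton_of_forall_eq 0 fun a => ?_
  have := h₂ (i + 1) hi
  have := h₃ i (by lia)
  obtain ⟨b, rfl⟩ := Ext.covariant_sequence_exact₁ X hS a (Subsingleton.elim _ _) rfl
  rw [Subsingleton.elim b 0, Ext.zero_comp]

theorem covariant_X₂ (hS : S.ShortExact) (h₁ : ExtVanishesAbove X S.X₁ k)
    (h₃ : ExtVanishesAbove X S.X₃ k) : ExtVanishesAbove X S.X₂ k := by
  refine fun i hi => subsingleton_of_forall_eq 0 fun a => ?_
  have := h₁ i hi
  have := h₃ i hi
  obtain ⟨b, rfl⟩ := Ext.covariant_sequence_exact₂ X hS a (Subsingleton.elim _ _)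
  rw [Subsingleton.elim b 0, Ext.zero_comp]

end ExtVanishesAbove

variable {S : ShortComplex C} (hS : S.ShortExact) [Projective S.X₂] (Y : C)
include hS

theorem subsingleton_ext_one_iff_of_projective :
    Subsingleton (Abelian.Ext S.X₃ Y 1) ↔ ∀ f : S.X₁ ⟶ Y, ∃ g : S.X₂ ⟶ Y, S.f ≫ g = f := by
  constructor
  · intro _ f
    obtain ⟨b, hb⟩ := Ext.contravariant_sequence_exact₁ hS Y (Ext.mk₀ f) (n₁ := 1) (by lia)
      (Subsingleton.elim _ _)
    obtain ⟨g, rfl⟩ := (Ext.mk₀_bijective _ _).2 b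
    exact ⟨g, (Ext.mk₀_bijective _ _).1 (by rw [← hb, Ext.mk₀_comp_mk₀])⟩
  · refine fun h => subsingleton_of_forall_eq 0 fun a => ?_
    obtain ⟨b, rfl⟩ := Ext.contravariant_sequence_exact₃ hS Y a (n₀ := 0)
      (Ext.eq_zero_of_projective _) (by lia)
    obtain ⟨f, rfl⟩ := (Ext.mk₀_bijective _ _).2 b
    obtain ⟨g, rfl⟩ := h f
    rw [← Ext.mk₀_comp_mk₀, ← Ext.comp_assoc_of_second_deg_zero, hS.extClass_comp, Ext.zero_comp]

theorem subsingleton_ext_add_two_iff_of_projective (n : ℕ) :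
    Subsingleton (Abelian.Ext S.X₃ Y (n + 2)) ↔ Subsingleton (Abelian.Ext S.X₁ Y (n + 1)) := by
  constructor
  · refine fun _ => subsingleton_of_forall_eq 0 fun a => ?_
    obtain ⟨b, rfl⟩ := Ext.contravariant_sequence_exact₁ hS Y a (n₁ := n + 2) (by lia)
      (Subsingleton.elim _ _)
    rw [Ext.eq_zero_of_projective b, Ext.comp_zero]
  · refine fun _ => subsingleton_of_forall_eq 0 fun a => ?_
    obtain ⟨b, rfl⟩ := Ext.contravariant_sequence_exact₃ hS Y a (n₀ := n + 1)
      (Ext.eq_zero_of_projective _) (by lia)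
    rw [Subsingleton.elim b 0, Ext.comp_zero]

end AbelianCategory

namespace ExtVanishesAbove

variable {R : Type u} [CommRing R]

theorem of_finite_projective_right {X : ModuleCat.{u} R} {k : ℕ}
    (h : ExtVanishesAbove X (ModuleCat.of R R) k) (P : Type u) [AddCommGroup P] [Module R P]
    [Module.Finite R P] [Module.Projective R P] : ExtVanishesAbove X (ModuleCat.of R P) k := by
  classical
  obtain ⟨n, f, g, -, -, hfg⟩ := Module.Finite.exists_comp_eq_id_of_projective R P
  let proj (j : Fin n) : ModuleCat.of R P ⟶ ModuleCat.of R R :=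
    ModuleCat.ofHom (LinearMap.proj j ∘ₗ g)
  let incl (j : Fin n) : ModuleCat.of R R ⟶ ModuleCat.of R P :=
    ModuleCat.ofHom (f ∘ₗ LinearMap.single R (fun _ => R) j)
  have id_eq_sum : 𝟙 (ModuleCat.of R P) = ∑ j, proj j ≫ incl j := by
    ext v
    simpa [proj, incl, ← map_sum, Finset.univ_sum_single] using (LinearMap.congr_fun hfg v).symm
  refine fun i hi => subsingleton_of_forall_eq 0 fun a => ?_
  have := h i hi
  rw [← Ext.comp_mk₀_id a, id_eq_sum, Ext.mk₀_sum, Ext.comp_sum]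
  refine Finset.sum_eq_zero fun j _ => ?_
  rw [← Ext.mk₀_comp_mk₀, ← Ext.comp_assoc_of_third_deg_zero,
    Subsingleton.elim (a.comp (Ext.mk₀ (proj j)) (add_zero i)) 0, Ext.zero_comp]

end ExtVanishesAbove

theorem SAC_iff (R : Type) [CommRing R] :
    SAC R ↔ ∀ (M : Type) [AddCommGroup M] [Module R M] [Module.Finite R M],
      ExtVanishesAbove (ModuleCat.of R M) (ModuleCat.of R R) 0 →
      (∃ k, ExtVanishesAbove (ModuleCat.of R M) (ModuleCat.of R M) k) →
      ExtVanishesAbove (ModuleCat.of R M) (ModuleCat.of R M) 0 := by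
  have extVanishesAbove_iff (X Y : ModuleCat.{0} R) (k : ℕ) : ExtVanishesAbove X Y k ↔
      ∀ i : ℕ, k < i → Subsingleton (ExtGroup R X Y i) := by
    refine forall₂_congr fun i hi => ?_
    obtain ⟨n, rfl⟩ := Nat.exists_eq_succ_of_ne_zero (Nat.ne_zero_of_lt hi)
    exact (subsingleton_derivedExt_succ_iff X Y n).symm
  simp only [extVanishesAbove_iff]
  exact ⟨fun h M _ _ hM => h (ModuleCat.of R M) hM, fun h M _ => h M⟩

section BaseChange

variable {A : Type u} [CommRing A]

section FreePresentation

variable {P M : Type u} [AddCommGroup P] [Module A P] [Module.Projective A P]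
  [AddCommGroup M] [Module A M] {K : Type u} [AddCommGroup K] [Module A K]
  {i : K →ₗ[A] P} {p : P →ₗ[A] M}

theorem subsingleton_ext_one_iff_lcomp_surjective (hi : Function.Injective i)
    (hex : Function.Exact i p) (hp : Function.Surjective p)
    (N : Type u) [AddCommGroup N] [Module A N] :
    Subsingleton (Abelian.Ext (ModuleCat.of A M) (ModuleCat.of A N) 1) ↔
      Function.Surjective (LinearMap.lcomp A N i) := by
  let S := ModuleCat.shortComplexOfCompEqZero i p hex.linearMap_comp_eq_zero
  have hS : S.ShortExact := ModuleCat.shortComplex_shortExact S hex hi hp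
  have : Projective S.X₂ := inferInstanceAs (Projective (ModuleCat.of A P))
  refine (subsingleton_ext_one_iff_of_projective hS _).trans ⟨fun h f => ?_, fun h f => ?_⟩
  · obtain ⟨g, hg⟩ := h (ModuleCat.ofHom f)
    exact ⟨g.hom, congrArg ModuleCat.Hom.hom hg⟩
  · obtain ⟨g, hg⟩ := h f.hom
    exact ⟨ModuleCat.ofHom g, ModuleCat.hom_ext hg⟩

theorem subsingleton_ext_add_two_iff_of_exact (hi : Function.Injective i)
    (hex : Function.Exact i p) (hp : Function.Surjective p)
    (N : Type u) [AddCommGroup N] [Module A N] (n : ℕ) :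
    Subsingleton (Abelian.Ext (ModuleCat.of A M) (ModuleCat.of A N) (n + 2)) ↔
      Subsingleton (Abelian.Ext (ModuleCat.of A K) (ModuleCat.of A N) (n + 1)) := by
  let S := ModuleCat.shortComplexOfCompEqZero i p hex.linearMap_comp_eq_zero
  have hS : S.ShortExact := ModuleCat.shortComplex_shortExact S hex hi hp
  have : Projective S.X₂ := inferInstanceAs (Projective (ModuleCat.of A P))
  exact subsingleton_ext_add_two_iff_of_projective hS _ n

end FreePresentation

variable [IsNoetherianRing A] (B : Type u) [CommRing B] [Algebra A B] [Module.FaithfullyFlat A B]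
  (M N : Type u) [AddCommGroup M] [Module A M] [Module.Finite A M] [AddCommGroup N] [Module A N]

variable {M} in
theorem lcomp_surjective_iff_baseChange {K : Type u} [AddCommGroup K] [Module A K]
    [Module.Finite A K] (i : K →ₗ[A] M) :
    Function.Surjective (LinearMap.lcomp A N i) ↔
      Function.Surjective (LinearMap.lcomp B (B ⊗[A] N) (i.baseChange B)) := by
  have := Module.finitePresentation_of_finite A K
  have := Module.finitePresentation_of_finite A M
  let eM := (Module.FinitePresentation.isBaseChange_map A M N B).equiv
  let eK := (Module.FinitePresentation.isBaseChange_map A K N B).equiv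
  have lcomp_comm (t : B ⊗[A] (M →ₗ[A] N)) : LinearMap.lcomp B (B ⊗[A] N) (i.baseChange B) (eM t) =
      eK ((LinearMap.lcomp A N i).lTensor B t) := by
    induction t with
    | zero => simp only [map_zero]
    | add s t hs ht => simp only [map_add, hs, ht]
    | tmul b f =>
      ext
      simp [eM, eK, IsBaseChange.equiv_tmul]
  calc Function.Surjective (LinearMap.lcomp A N i)
    _ ↔ Function.Surjective ((LinearMap.lcomp A N i).lTensor B) :=
      (Module.FaithfullyFlat.lTensor_surjective_iff_surjective A B _).symm
    _ ↔ Function.Surjective (LinearMap.lcomp B (B ⊗[A] N) (i.baseChange B) ∘ eM) := by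
      rw [← EquivLike.comp_surjective _ eK]
      exact iff_of_eq (congrArg _ (funext fun t => (lcomp_comm t).symm))
    _ ↔ Function.Surjective (LinearMap.lcomp B (B ⊗[A] N) (i.baseChange B)) :=
      EquivLike.surjective_comp eM _

theorem subsingleton_ext_succ_iff_baseChange (M N : Type u) [AddCommGroup M] [Module A M]
    [Module.Finite A M] [AddCommGroup N] [Module A N] (n : ℕ) :
    Subsingleton (Abelian.Ext (ModuleCat.of A M) (ModuleCat.of A N) (n + 1)) ↔
      Subsingleton
        (Abelian.Ext (ModuleCat.of B (B ⊗[A] M)) (ModuleCat.of B (B ⊗[A] N)) (n + 1)) := by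
  obtain ⟨l, p, hp⟩ := Module.Finite.exists_fin' A M
  let i := (LinearMap.ker p).subtype
  have hi : Function.Injective i := Submodule.injective_subtype _
  have hex : Function.Exact i p := p.exact_subtype_ker_map
  have hiB : Function.Injective (i.baseChange B) :=
    Module.Flat.lTensor_preserves_injective_linearMap i hi
  have hexB : Function.Exact (i.baseChange B) (p.baseChange B) := lTensor_exact B hex hp
  have hpB : Function.Surjective (p.baseChange B) := p.lTensor_surjective B hp
  cases n with
  | zero =>
    rw [zero_add, subsingleton_ext_one_iff_lcomp_surjective hi hex hp,
      subsingleton_ext_one_iff_lcomp_surjective hiB hexB hpB]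
    exact lcomp_surjective_iff_baseChange B N i
  | succ n =>
    rw [subsingleton_ext_add_two_iff_of_exact hi hex hp,
      subsingleton_ext_add_two_iff_of_exact hiB hexB hpB]
    exact subsingleton_ext_succ_iff_baseChange (LinearMap.ker p) N n

theorem extVanishesAbove_iff_baseChange (k : ℕ) :
    ExtVanishesAbove (ModuleCat.of A M) (ModuleCat.of A N) k ↔
      ExtVanishesAbove (ModuleCat.of B (B ⊗[A] M)) (ModuleCat.of B (B ⊗[A] N)) k := by
  refine forall₂_congr fun i hi => ?_
  obtain ⟨n, rfl⟩ := Nat.exists_eq_succ_of_ne_zero (Nat.ne_zero_of_lt hi)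
  exact subsingleton_ext_succ_iff_baseChange B M N n

theorem extVanishesAbove_self_iff_baseChange (k : ℕ) :
    ExtVanishesAbove (ModuleCat.of A M) (ModuleCat.of A A) k ↔
      ExtVanishesAbove (ModuleCat.of B (B ⊗[A] M)) (ModuleCat.of B B) k := by
  let e : ModuleCat.of B (B ⊗[A] A) ≅ ModuleCat.of B B :=
    (AlgebraTensorModule.rid A B B).toModuleIso
  exact (extVanishesAbove_iff_baseChange B M A k).trans
    ⟨.of_iso (.refl _) e, .of_iso (.refl _) e.symm⟩

end BaseChange

namespace SAC

theorem of_faithfullyFlat {A B : Type} [CommRing A] [CommRing B] [Algebra A B]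
    [IsNoetherianRing A] [Module.FaithfullyFlat A B] (h : SAC B) : SAC A := by
  rw [SAC_iff] at h ⊢
  rintro M _ _ _ hMA ⟨k, hMM⟩
  rw [extVanishesAbove_iff_baseChange B]
  exact h _ ((extVanishesAbove_self_iff_baseChange B M 0).1 hMA)
    ⟨k, (extVanishesAbove_iff_baseChange B M M k).1 hMM⟩

theorem of_ringEquiv {A B : Type} [CommRing A] [CommRing B] [IsNoetherianRing A] (e : A ≃+* B)
    (h : SAC B) : SAC A := by
  let _ := e.toRingHom.toAlgebra
  have : Module.FaithfullyFlat A B := RingHom.FaithfullyFlat.of_bijective e.bijective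
  exact h.of_faithfullyFlat

end SAC

section Pullback

variable {R P M : Type*} [CommRing R] [AddCommGroup P] [Module R P] [AddCommGroup M] [Module R M]

/-- The pullback `{(p, m) | π p = x • m}` of `π : P → M` along multiplication by `x` on `M`,
as the kernel of `(p, m) ↦ π p - x • m`. -/
def smulPullback (x : R) (π : P →ₗ[R] M) : Submodule R (P × M) :=
  LinearMap.ker (π ∘ₗ LinearMap.fst R P M - x • LinearMap.snd R P M)

@[simp]
theorem mem_smulPullback {x : R} {π : P →ₗ[R] M} {y : P × M} :
    y ∈ smulPullback x π ↔ π y.1 = x • y.2 := by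
  simp [smulPullback, sub_eq_zero]

end Pullback

section PullbackExt

variable {R : Type u} [CommRing R] {P M : Type u} [AddCommGroup P] [Module R P]
  [AddCommGroup M] [Module R M]

theorem ExtVanishesAbove.prod_left {Y : ModuleCat.{u} R} {k : ℕ}
    (hP : ExtVanishesAbove (ModuleCat.of R P) Y k) (hM : ExtVanishesAbove (ModuleCat.of R M) Y k) :
    ExtVanishesAbove (ModuleCat.of R (P × M)) Y k :=
  have exact_inl_snd := Function.Exact.inl_snd (R := R) (M := P) (N := M)
  contravariant_X₂ (ModuleCat.shortComplex_shortExact (ModuleCat.shortComplexOfCompEqZero _ _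
    exact_inl_snd.linearMap_comp_eq_zero) exact_inl_snd LinearMap.inl_injective
    LinearMap.snd_surjective) hP hM

theorem ExtVanishesAbove.prod_right {X : ModuleCat.{u} R} {k : ℕ}
    (hP : ExtVanishesAbove X (ModuleCat.of R P) k) (hM : ExtVanishesAbove X (ModuleCat.of R M) k) :
    ExtVanishesAbove X (ModuleCat.of R (P × M)) k :=
  have exact_inl_snd := Function.Exact.inl_snd (R := R) (M := P) (N := M)
  covariant_X₂ (ModuleCat.shortComplex_shortExact (ModuleCat.shortComplexOfCompEqZero _ _
    exact_inl_snd.linearMap_comp_eq_zero) exact_inl_snd LinearMap.inl_injective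
    LinearMap.snd_surjective) hP hM

theorem subsingleton_of_smul_surjective {E : Type*} [AddCommGroup E] [Module R E]
    [Module.Finite R E] {x : R} (hx : x ∈ Ideal.jacobson (⊥ : Ideal R))
    (h : ∀ y : E, ∃ z, x • z = y) : Subsingleton E := by
  have top_le_smul : (⊤ : Submodule R E) ≤ Ideal.span {x} • ⊤ := by
    intro y _
    obtain ⟨z, rfl⟩ := h y
    exact Submodule.smul_mem_smul (Ideal.mem_span_singleton_self x) trivial
  have top_eq_bot := Submodule.eq_bot_of_le_smul_of_le_jacobson_bot _ ⊤ Module.Finite.fg_top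
    top_le_smul ((Ideal.span_singleton_le_iff_mem _).2 hx)
  exact (Submodule.subsingleton_iff R).1 (subsingleton_of_bot_eq_top top_eq_bot.symm)

namespace smulPullback

/-- The short complex `0 → smulPullback x π → P × M → M → 0`, which is exact when `π` is
surjective. -/
abbrev shortComplex (x : R) (π : P →ₗ[R] M) : ShortComplex (ModuleCat.{u} R) where
  X₁ := ModuleCat.of R (smulPullback x π)
  X₂ := ModuleCat.of R (P × M)
  X₃ := ModuleCat.of R M
  f := ModuleCat.ofHom (smulPullback x π).subtype
  g := ModuleCat.ofHom (π ∘ₗ LinearMap.fst R P M - x • LinearMap.snd R P M)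
  zero := by
    ext y
    exact y.2

variable {x : R} {π : P →ₗ[R] M} (hπ : Function.Surjective π)
include hπ

theorem shortExact (x : R) : (shortComplex x π).ShortExact := by
  refine ModuleCat.shortComplex_shortExact _ (fun y => ?_) (Submodule.injective_subtype _)
    fun m => ?_
  · exact LinearMap.exact_subtype_ker_map (π ∘ₗ LinearMap.fst R P M - x • LinearMap.snd R P M) y
  · obtain ⟨p, rfl⟩ := hπ m
    exact ⟨(p, 0), by simp⟩

theorem extVanishesAbove_of_left [IsNoetherianRing R] [Module.Finite R M]
    (hx : x ∈ Ideal.jacobson (⊥ : Ideal R)) {Y : ModuleCat.{u} R} [Module.Finite R Y] {k : ℕ}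
    (h : ExtVanishesAbove (ModuleCat.of R (smulPullback x π)) Y k) :
    ExtVanishesAbove (ModuleCat.of R M) Y k := by
  refine fun i hi => subsingleton_of_smul_surjective hx fun y => ?_
  have : Subsingleton (Abelian.Ext (shortComplex x π).X₁ Y i) := h i hi
  let inr := ModuleCat.ofHom (LinearMap.inr R P M)
  let snd := ModuleCat.ofHom (LinearMap.snd R P M)
  have inr_snd : inr ≫ snd = 𝟙 (ModuleCat.of R M) := by ext; simp [inr, snd]
  have inr_g : inr ≫ (shortComplex x π).g = -(x • 𝟙 (ModuleCat.of R M)) := by ext; simp [inr]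
  obtain ⟨w, hw⟩ := Ext.contravariant_sequence_exact₂ (shortExact hπ x) Y
    ((Ext.mk₀ snd).comp y (zero_add i)) (Subsingleton.elim _ _)
  refine ⟨-w, ?_⟩
  calc x • -w = (Ext.mk₀ (inr ≫ (shortComplex x π).g)).comp w (zero_add i) := by
        simp [inr_g, Ext.mk₀_smul, Ext.mk₀_neg]
    _ = (Ext.mk₀ (inr ≫ snd)).comp y (zero_add i) := by
        rw [← Ext.mk₀_comp_mk₀_assoc, hw, Ext.mk₀_comp_mk₀_assoc]
    _ = y := by rw [inr_snd, Ext.mk₀_id_comp]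

variable [Module.Projective R P]

theorem extVanishesAbove_left {Y : ModuleCat.{u} R} {k : ℕ}
    (h : ExtVanishesAbove (ModuleCat.of R M) Y k) :
    ExtVanishesAbove (ModuleCat.of R (smulPullback x π)) Y k :=
  .contravariant_X₁ (shortExact hπ x) (.prod_left (.of_projective _ _ _) h) (h.mono k.le_succ)

variable [Module.Finite R P]

theorem extVanishesAbove_right {X : ModuleCat.{u} R} {k : ℕ}
    (hR : ExtVanishesAbove X (ModuleCat.of R R) 0) (hM : ExtVanishesAbove X (ModuleCat.of R M) k) :
    ExtVanishesAbove X (ModuleCat.of R (smulPullback x π)) (k + 1) :=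
  .covariant_X₁ (shortExact hπ x)
    (.prod_right ((hR.of_finite_projective_right P).mono (Nat.zero_le _)) (hM.mono k.le_succ)) hM

theorem extVanishesAbove_of_right [IsNoetherianRing R] [Module.Finite R M]
    (hx : x ∈ Ideal.jacobson (⊥ : Ideal R)) {X : ModuleCat.{u} R} [Module.Finite R X] {k : ℕ}
    (hR : ExtVanishesAbove X (ModuleCat.of R R) k)
    (h : ExtVanishesAbove X (ModuleCat.of R (smulPullback x π)) (k + 1)) :
    ExtVanishesAbove X (ModuleCat.of R M) k := by
  refine fun i hi => subsingleton_of_smul_surjective hx fun y => ?_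
  have : Subsingleton (Abelian.Ext X (shortComplex x π).X₁ (i + 1)) := h (i + 1) (by lia)
  have := hR.of_finite_projective_right P i hi
  obtain ⟨z, hz⟩ := Ext.covariant_sequence_exact₃ X (shortExact hπ x) y rfl (Subsingleton.elim _ _)
  let fst := ModuleCat.ofHom (LinearMap.fst R P M)
  let snd := ModuleCat.ofHom (LinearMap.snd R P M)
  have g_eq : (shortComplex x π).g = fst ≫ ModuleCat.ofHom π + -(x • snd) := by
    rw [← sub_eq_add_neg]; rfl
  refine ⟨-z.comp (Ext.mk₀ snd) (add_zero i), ?_⟩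
  rw [← hz, g_eq, Ext.mk₀_add, Ext.comp_add, ← Ext.mk₀_comp_mk₀,
    ← Ext.comp_assoc_of_third_deg_zero,
    Subsingleton.elim (z.comp (Ext.mk₀ fst) (add_zero i)) 0]
  simp [Ext.mk₀_smul, Ext.mk₀_neg]

end smulPullback

end PullbackExt

section SurjectiveModX

variable {A B : Type*} [CommRing A] [CommRing B] [Algebra A B] {x : A}
  (hAB : Function.Surjective (algebraMap A (B ⧸ Ideal.span {algebraMap A B x})))
include hAB

theorem exists_eq_algebraMap_add_smul (b : B) : ∃ a b', b = algebraMap A B a + x • b' := by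
  obtain ⟨a, ha⟩ := hAB (Ideal.Quotient.mk _ b)
  have sub_mem : b - algebraMap A B a ∈ Ideal.span {algebraMap A B x} :=
    (Ideal.Quotient.mk_eq_mk_iff_sub_mem _ _).1 ha.symm
  obtain ⟨b', hb'⟩ := Ideal.mem_span_singleton.1 sub_mem
  exact ⟨a, b', by rw [Algebra.smul_def, ← hb', add_sub_cancel]⟩

theorem exists_eq_one_tmul_add_smul {Q : Type*} [AddCommGroup Q] [Module A Q] (t : B ⊗[A] Q) :
    ∃ q t', t = 1 ⊗ₜ q + x • t' := by
  induction t with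
  | zero => exact ⟨0, 0, by simp⟩
  | add s t hs ht =>
    obtain ⟨p, s', rfl⟩ := hs
    obtain ⟨q, t', rfl⟩ := ht
    exact ⟨p + q, s' + t', by rw [tmul_add, smul_add, add_add_add_comm]⟩
  | tmul b q =>
    obtain ⟨a, b', rfl⟩ := exists_eq_algebraMap_add_smul hAB b
    refine ⟨a • q, b' ⊗ₜ q, ?_⟩
    rw [add_tmul, smul_tmul', tmul_smul, smul_tmul', Algebra.algebraMap_eq_smul_one]

theorem exists_eq_one_tmul_of_smul_eq_zero {Q : Type*} [AddCommGroup Q] [Module A Q]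
    (hQ : ∀ q : Q, x • q = 0) (t : B ⊗[A] Q) : ∃ q, t = 1 ⊗ₜ q := by
  have smul_eq_zero (s : B ⊗[A] Q) : x • s = 0 := by
    induction s with
    | zero => exact smul_zero x
    | add s t hs ht => rw [smul_add, hs, ht, add_zero]
    | tmul b q => rw [← tmul_smul, hQ, tmul_zero]
  obtain ⟨q, t', rfl⟩ := exists_eq_one_tmul_add_smul hAB t
  exact ⟨q, by rw [smul_eq_zero, add_zero]⟩

variable {M : Type*} [AddCommGroup M] [Module A M] [Module B M] [IsScalarTower A B M]

theorem finite_of_smul_eq_zero [Module.Finite B M] (hM : ∀ m : M, x • m = 0) :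
    Module.Finite A M := by
  obtain ⟨s, hs⟩ := Module.Finite.fg_top (R := B) (M := M)
  refine ⟨s, eq_top_iff.2 fun m _ => ?_⟩
  have hm : m ∈ Submodule.span B (s : Set M) := hs ▸ trivial
  induction hm using Submodule.span_induction with
  | mem m hm => exact Submodule.subset_span hm
  | zero => exact zero_mem _
  | add m n _ _ hm hn => exact add_mem (hm trivial) (hn trivial)
  | smul b m _ hm =>
    obtain ⟨a, b', rfl⟩ := exists_eq_algebraMap_add_smul hAB b
    rw [add_smul, smul_assoc, hM, add_zero, algebraMap_smul]
    exact Submodule.smul_mem _ _ (hm trivial)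

namespace smulPullback

variable {P : Type*} [AddCommGroup P] [Module A P] (π : P →ₗ[A] M)

theorem finite_of_surjective_algebraMap_quotient [IsNoetherianRing A] [IsNoetherianRing B]
    [Module.Finite A P] [Module.Finite B M] : Module.Finite A (smulPullback x π) := by
  rw [Module.Finite.iff_fg]
  refine Submodule.fg_of_fg_map_of_fg_inf_ker (LinearMap.fst A P M) (IsNoetherian.noetherian _) ?_
  let T := (LinearMap.ker (LinearMap.lsmul B M (algebraMap A B x)))
  have : Module.Finite A T := finite_of_smul_eq_zero hAB fun m =>
    Subtype.ext ((algebraMap_smul B x (m : M)).symm.trans m.2)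
  have inf_ker_eq : smulPullback x π ⊓ LinearMap.ker (LinearMap.fst A P M) =
      (T.restrictScalars A).map (LinearMap.inr A P M) := by
    ext ⟨p, m⟩
    simp only [Submodule.mem_inf, mem_smulPullback, LinearMap.mem_ker, LinearMap.fst_apply,
      Submodule.map_inr, Submodule.mem_prod, Submodule.mem_bot, Submodule.restrictScalars_mem,
      LinearMap.lsmul_apply, algebraMap_smul, T]
    constructor
    · rintro ⟨h, rfl⟩
      exact ⟨rfl, by rw [← h, map_zero]⟩
    · rintro ⟨rfl, h⟩
      exact ⟨by rw [h, map_zero], rfl⟩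
  rw [inf_ker_eq]
  exact (Module.Finite.iff_fg.1 this).map _

variable (B) in
/-- The `B`-linear map `B ⊗ K → (B ⊗ P) × M` sending `b ⊗ (p, m)` to `(b ⊗ p, b • m)`, where
`K = smulPullback x π`. -/
noncomputable def tensorToProd (x : A) :
    B ⊗[A] smulPullback x π →ₗ[B] (B ⊗[A] P) × M :=
  (((TensorProduct.mk A B P 1).prodMap LinearMap.id) ∘ₗ
    (smulPullback x π).subtype).liftBaseChange B

omit hAB in
theorem tensorToProd_tmul (b : B) (k : smulPullback x π) :
    tensorToProd B π x (b ⊗ₜ k) = (b ⊗ₜ k.1.1, b • k.1.2) := by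
  simp [tensorToProd, smul_tmul']

theorem tensorToProd_injective [Module.Flat A B] : Function.Injective (tensorToProd B π x) := by
  rw [injective_iff_map_eq_zero]
  intro t ht
  let fst : smulPullback x π →ₗ[A] P := LinearMap.fst A P M ∘ₗ (smulPullback x π).subtype
  have fst_eq_zero : fst.lTensor B t = 0 := by
    have fst_comp : fst.baseChange B = LinearMap.fst B (B ⊗[A] P) M ∘ₗ tensorToProd B π x := by
      ext k
      simp [tensorToProd_tmul, fst]
    calc fst.lTensor B t = (tensorToProd B π x t).1 := LinearMap.congr_fun fst_comp t
      _ = 0 := by rw [ht, Prod.fst_zero]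
  have ker_exact : Function.Exact ((LinearMap.ker fst).subtype.lTensor B) (fst.lTensor B) :=
    Module.Flat.lTensor_exact (N := LinearMap.ker fst) B fst.exact_subtype_ker_map
  obtain ⟨s, rfl⟩ := (ker_exact t).1 fst_eq_zero
  have smul_eq_zero (k : LinearMap.ker fst) : x • k = 0 := by
    obtain ⟨⟨⟨p, m⟩, hk⟩, rfl : p = 0⟩ := k
    ext
    · simp
    · simpa using (mem_smulPullback.1 hk).symm
  obtain ⟨⟨⟨⟨p, m⟩, hk⟩, rfl : p = 0⟩, rfl⟩ :=
    exists_eq_one_tmul_of_smul_eq_zero (Q := LinearMap.ker fst) hAB smul_eq_zero s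
  obtain rfl : m = 0 := by simpa [tensorToProd_tmul] using congrArg Prod.snd ht
  exact tmul_zero _ _

omit hAB in
theorem smul_lift_mem_range_tensorToProd (u : B ⊗[A] P) :
    (x • u, π.liftBaseChange B u) ∈ LinearMap.range (tensorToProd B π x) := by
  let f : P →ₗ[A] smulPullback x π :=
    ((x • LinearMap.id).prod π).codRestrict (smulPullback x π) fun p => by simp
  suffices tensorToProd B π x (f.baseChange B u) = (x • u, π.liftBaseChange B u) from ⟨_, this⟩
  induction u with
  | zero => simp only [map_zero, smul_zero, Prod.mk_zero_zero]
  | add s t hs ht => simp only [map_add, hs, ht, Prod.mk_add_mk, smul_add]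
  | tmul b p => simp [tensorToProd_tmul, f]

theorem range_tensorToProd : LinearMap.range (tensorToProd B π x) =
    smulPullback (algebraMap A B x) (π.liftBaseChange B) := by
  apply le_antisymm
  · rintro _ ⟨t, rfl⟩
    induction t with
    | zero => rw [map_zero]; exact zero_mem _
    | add s t hs ht => rw [map_add]; exact add_mem hs ht
    | tmul b k =>
      rw [tensorToProd_tmul, mem_smulPullback, LinearMap.liftBaseChange_tmul,
        mem_smulPullback.1 k.2, algebraMap_smul, smul_comm]
  · rintro ⟨u, m⟩ hum
    obtain ⟨p, u', rfl⟩ := exists_eq_one_tmul_add_smul hAB u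
    have hp : π p = x • (m - π.liftBaseChange B u') := by
      rw [mem_smulPullback, map_add, LinearMap.liftBaseChange_tmul, one_smul,
        algebraMap_smul, ← algebraMap_smul B x u', map_smul, algebraMap_smul] at hum
      rw [smul_sub, ← hum, add_sub_cancel_right]
    have one_tmul_mem : ((1 : B) ⊗ₜ[A] p, m - π.liftBaseChange B u') ∈
        LinearMap.range (tensorToProd B π x) :=
      ⟨1 ⊗ₜ ⟨(p, m - π.liftBaseChange B u'), mem_smulPullback.2 hp⟩, by
        rw [tensorToProd_tmul, one_smul]⟩
    simpa using add_mem one_tmul_mem (smul_lift_mem_range_tensorToProd π u')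

/-- If `A → B ⧸ xB` is surjective and `B` is flat over `A`, then the pullback along
multiplication by `x` on a `B`-module is extended from `A`. -/
noncomputable def tensorEquiv [Module.Flat A B] : B ⊗[A] smulPullback x π ≃ₗ[B]
    smulPullback (algebraMap A B x) (π.liftBaseChange B) :=
  LinearEquiv.ofInjective _ (tensorToProd_injective hAB π) ≪≫ₗ
    LinearEquiv.ofEq _ _ (range_tensorToProd hAB π)

end smulPullback

end SurjectiveModX

theorem SAC.of_surjective_algebraMap_quotient {A B : Type} [CommRing A] [CommRing B] [Algebra A B]
    [IsNoetherianRing A] [IsNoetherianRing B] [Module.FaithfullyFlat A B] {x : A}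
    (hx : algebraMap A B x ∈ Ideal.jacobson (⊥ : Ideal B))
    (hAB : Function.Surjective (algebraMap A (B ⧸ Ideal.span {algebraMap A B x})))
    (h : SAC A) : SAC B := by
  rw [SAC_iff] at h ⊢
  rintro M _ _ _ hMB ⟨k, hMM⟩
  let _ : Module A M := Module.compHom M (algebraMap A B)
  have : IsScalarTower A B M := IsScalarTower.of_compHom A B M
  obtain ⟨l, v, hv⟩ := Module.Finite.exists_fin (R := B) (M := M)
  let π : (Fin l → A) →ₗ[A] M := Fintype.linearCombination A v
  have hπ : Function.Surjective (π.liftBaseChange B) := by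
    rw [← LinearMap.range_eq_top, eq_top_iff, ← hv, Submodule.span_le]
    rintro _ ⟨j, rfl⟩
    exact ⟨1 ⊗ₜ Pi.single j 1, by simp [π]⟩
  let K := smulPullback x π
  have : Module.Finite A K := smulPullback.finite_of_surjective_algebraMap_quotient hAB π
  let e : ModuleCat.of B (B ⊗[A] K) ≅
      ModuleCat.of B (smulPullback (algebraMap A B x) (π.liftBaseChange B)) :=
    (smulPullback.tensorEquiv hAB π).toModuleIso
  have hXB := smulPullback.extVanishesAbove_left hπ (x := algebraMap A B x) hMB
  have hXM := smulPullback.extVanishesAbove_left hπ (x := algebraMap A B x) hMM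
  have hXX := smulPullback.extVanishesAbove_right hπ (x := algebraMap A B x) hXB hXM
  have hKA := (extVanishesAbove_self_iff_baseChange B K 0).2 (hXB.of_iso e.symm (.refl _))
  have hKK := (extVanishesAbove_iff_baseChange B K K (k + 1)).2 (hXX.of_iso e.symm e.symm)
  have hXX' := ((extVanishesAbove_iff_baseChange B K K 0).1 (h K hKA ⟨_, hKK⟩)).of_iso e e
  have : Module.Finite B (smulPullback (algebraMap A B x) (π.liftBaseChange B)) := inferInstance
  exact smulPullback.extVanishesAbove_of_left hπ hx
    (smulPullback.extVanishesAbove_of_right hπ hx hXB (hXX'.mono zero_le_one))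

section CompletionLift

variable {A : Type*} [CommRing A] (I : Ideal A) (S : Type*) [CommRing S] [Algebra A S]

/-- The map from the `I`-adic completion of `A` to `S ⧸ IⁿS` induced by `A → S`. -/
noncomputable def evalQuotientMap (n : ℕ) :
    AdicCompletion I A →ₐ[A] S ⧸ I.map (algebraMap A S) ^ n :=
  (Ideal.quotientMapₐ _ (Algebra.ofId A S)
    (Ideal.map_le_iff_le_comap.1 (Ideal.map_pow (algebraMap A S) I n).le)).comp
      (AdicCompletion.evalₐ I n)

theorem factorₐ_comp_evalQuotientMap {m n : ℕ} (hmn : m ≤ n) :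
    (Ideal.Quotient.factorₐ A (Ideal.pow_le_pow_right hmn)).comp (evalQuotientMap I S n) =
      evalQuotientMap I S m := by
  ext x
  obtain ⟨y, rfl⟩ := AdicCompletion.mk_surjective I A x
  simp only [evalQuotientMap, AlgHom.comp_apply, AdicCompletion.evalₐ_mk]
  rw [← AdicCompletion.Ideal.mk_eq_mk I hmn y]
  rfl

variable [IsAdicComplete (I.map (algebraMap A S)) S]

/-- The extension of the structure map `A → S` to the `I`-adic completion of `A`, for an
`A`-algebra `S` that is `I`-adically complete. -/
noncomputable def completionLift : AdicCompletion I A →ₐ[A] S :=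
  IsAdicComplete.liftAlgHom (I.map (algebraMap A S)) (evalQuotientMap I S)
    (factorₐ_comp_evalQuotientMap I S)

variable {I} in
theorem mk_completionLift {n : ℕ} {y : AdicCompletion I A} {a : A}
    (h : AdicCompletion.evalₐ I n y = Ideal.Quotient.mk (I ^ n) a) :
    Ideal.Quotient.mk (I.map (algebraMap A S) ^ n) (completionLift I S y) =
      Ideal.Quotient.mk _ (algebraMap A S a) := by
  refine (IsAdicComplete.mk_liftAlgHom _ _ (factorₐ_comp_evalQuotientMap I S) n y).trans ?_
  rw [evalQuotientMap, AlgHom.comp_apply, h]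
  rfl

theorem completionLift_injective [Module.FaithfullyFlat A S] :
    Function.Injective (completionLift I S) := by
  refine (injective_iff_map_eq_zero _).2 fun y hy => AdicCompletion.ext_evalₐ fun n => ?_
  obtain ⟨a, ha⟩ := Ideal.Quotient.mk_surjective (AdicCompletion.evalₐ I n y)
  have algebraMap_mem : algebraMap A S a ∈ (I ^ n).map (algebraMap A S) := by
    rw [Ideal.map_pow, ← Ideal.Quotient.eq_zero_iff_mem, ← mk_completionLift S ha.symm, hy,
      map_zero]
  rw [← Ideal.mem_comap, Ideal.comap_map_eq_self_of_faithfullyFlat] at algebraMap_mem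
  rw [← ha, map_zero, Ideal.Quotient.eq_zero_iff_mem]
  exact algebraMap_mem

theorem completionLift_surjective (hI : I.FG)
    (hS : Function.Surjective (algebraMap A (S ⧸ I.map (algebraMap A S)))) :
    Function.Surjective (completionLift I S) := by
  have := AdicCompletion.isAdicComplete_self I hI
  have map_eq : (I.map (algebraMap A (AdicCompletion I A))).map (completionLift I S).toRingHom =
      I.map (algebraMap A S) := by
    rw [Ideal.map_map]
    exact congrArg (Ideal.map · I) (completionLift I S).comp_algebraMap
  have : IsHausdorff ((I.map (algebraMap A (AdicCompletion I A))).map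
      (completionLift I S).toRingHom) S := by
    rw [map_eq]; infer_instance
  refine surjective_of_mk_map_comp_surjective (I := I.map (algebraMap A (AdicCompletion I A)))
    (completionLift I S).toRingHom ?_
  rw [map_eq]
  intro s
  obtain ⟨a, rfl⟩ := hS s
  exact ⟨algebraMap A _ a, congrArg _ ((completionLift I S).commutes a)⟩

end CompletionLift

section AdicCompletion

variable {R : Type*} [CommRing R] [IsNoetherianRing R] (I : Ideal R)

theorem surjective_algebraMap_adicCompletion_quotient : Function.Surjective (algebraMap R
    (AdicCompletion I R ⧸ I.map (algebraMap R (AdicCompletion I R)))) := by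
  intro y
  obtain ⟨y, rfl⟩ := Ideal.Quotient.mk_surjective y
  obtain ⟨a, ha⟩ := Ideal.Quotient.mk_surjective (AdicCompletion.evalOneₐ I y)
  refine ⟨a, (Ideal.Quotient.mk_eq_mk_iff_sub_mem _ _).2 ?_⟩
  rw [← AdicCompletion.ker_evalOneₐ_eq_map I (IsNoetherian.noetherian I), RingHom.mem_ker,
    map_sub, sub_eq_zero]
  exact ha

instance isNoetherianRing_adicCompletion : IsNoetherianRing (AdicCompletion I R) := by
  obtain ⟨n, v, hv⟩ := Submodule.fg_iff_exists_fin_generating_family.1 (IsNoetherian.noetherian I)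
  let _ : Algebra (MvPolynomial (Fin n) R) (AdicCompletion I R) :=
    ((algebraMap R _).comp
      (MvPolynomial.aeval v : MvPolynomial (Fin n) R →ₐ[R] R).toRingHom).toAlgebra
  let J := MvPolynomial.idealOfVars (Fin n) R
  have map_eq : J.map (algebraMap (MvPolynomial (Fin n) R) (AdicCompletion I R)) =
      I.map (algebraMap R (AdicCompletion I R)) := by
    have map_aeval_eq : J.map (MvPolynomial.aeval v : _ →ₐ[R] R).toRingHom = I := by
      rw [← hv, Ideal.map_span, ← Set.range_comp]
      exact congrArg (fun w => Ideal.span (Set.range w)) (funext (MvPolynomial.aeval_X v))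
    rw [RingHom.algebraMap_toAlgebra, ← Ideal.map_map, map_aeval_eq]
  have : IsAdicComplete (J.map (algebraMap (MvPolynomial (Fin n) R) (AdicCompletion I R)))
      (AdicCompletion I R) := by
    rw [map_eq]
    exact AdicCompletion.isAdicComplete_self I (IsNoetherian.noetherian I)
  have : IsNoetherianRing (AdicCompletion J (MvPolynomial (Fin n) R)) :=
    isNoetherianRing_of_ringEquiv (MvPowerSeries (Fin n) R)
      (MvPowerSeries.toAdicCompletionAlgEquiv (Fin n) R).toRingEquiv
  refine isNoetherianRing_of_surjective _ _ (completionLift J (AdicCompletion I R)).toRingHom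
    (completionLift_surjective J _ (IsNoetherian.noetherian J) ?_)
  rw [map_eq]
  intro y
  obtain ⟨a, rfl⟩ := surjective_algebraMap_adicCompletion_quotient I y
  exact ⟨MvPolynomial.C a, congrArg (Ideal.Quotient.mk _) (by simp [RingHom.algebraMap_toAlgebra])⟩

variable {I}

theorem faithfullyFlat_adicCompletion (hI : I ≤ Ideal.jacobson ⊥) :
    Module.FaithfullyFlat R (AdicCompletion I R) := by
  refine ⟨fun p hp h => ?_⟩
  have I_le : I ≤ p := hI.trans (sInf_le ⟨bot_le, hp⟩)
  have := AdicCompletion.isMaximal_map_of_le I p I_le (IsNoetherian.noetherian I)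
  rw [Ideal.smul_top_eq_map, Submodule.restrictScalars_eq_top_iff] at h
  exact this.ne_top h

theorem map_algebraMap_adicCompletion_le_jacobson {J : Ideal R} (hJ : J ≤ Ideal.jacobson ⊥) :
    J.map (algebraMap R (AdicCompletion I R)) ≤ Ideal.jacobson ⊥ := by
  have hI := IsNoetherian.noetherian I
  have := AdicCompletion.isAdicComplete_self I hI
  let f : AdicCompletion I R →+* R ⧸ I := (AdicCompletion.evalOneₐ I).toRingHom
  have f_surjective : Function.Surjective f := AdicCompletion.evalOneₐ_surjective I
  have ker_le : RingHom.ker f ≤ Ideal.jacobson ⊥ := by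
    rw [AdicCompletion.ker_evalOneₐ_eq_map I hI]
    exact IsAdicComplete.le_jacobson_bot _
  have map_f_le : J.map (Ideal.Quotient.mk I) ≤ Ideal.jacobson ⊥ := by
    rw [Ideal.map_le_iff_le_comap,
      Ideal.comap_jacobson_of_surjective Ideal.Quotient.mk_surjective]
    exact hJ.trans (Ideal.jacobson_mono bot_le)
  calc J.map (algebraMap R (AdicCompletion I R)) ≤ (Ideal.jacobson ⊥).comap f := by
        rw [← Ideal.map_le_iff_le_comap, Ideal.map_map]
        exact map_f_le
    _ = (RingHom.ker f).jacobson := Ideal.comap_jacobson_of_surjective f_surjective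
    _ ≤ Ideal.jacobson ⊥ := (Ideal.jacobson_mono ker_le).trans_eq Ideal.jacobson_idem

end AdicCompletion

section IteratedCompletion

theorem surjective_algebraMap_quotient_of_le {A B : Type*} [CommRing A] [CommRing B] [Algebra A B]
    {J K : Ideal B} (h : Function.Surjective (algebraMap A (B ⧸ J))) (hJK : J ≤ K) :
    Function.Surjective (algebraMap A (B ⧸ K)) :=
  (Ideal.Quotient.factor_surjective hJK).comp h

theorem surjective_algebraMap_quotient_map_trans {A B C : Type*} [CommRing A] [CommRing B]
    [CommRing C] [Algebra A B] [Algebra B C] [Algebra A C] [IsScalarTower A B C] (I : Ideal B)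
    (hAB : Function.Surjective (algebraMap A (B ⧸ I)))
    (hBC : Function.Surjective (algebraMap B (C ⧸ I.map (algebraMap B C)))) :
    Function.Surjective (algebraMap A (C ⧸ I.map (algebraMap B C))) := by
  intro c
  obtain ⟨b, rfl⟩ := hBC c
  obtain ⟨a, ha⟩ := hAB (Ideal.Quotient.mk I b)
  refine ⟨a, (Ideal.Quotient.mk_eq_mk_iff_sub_mem _ _).2 ?_⟩
  rw [IsScalarTower.algebraMap_apply A B C, ← map_sub]
  exact Ideal.mem_map_of_mem _ ((Ideal.Quotient.mk_eq_mk_iff_sub_mem _ _).1 ha)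

/-- Completing at `J ≤ I` and then at the extension of `I` is the same as completing at `I`. -/
noncomputable def iteratedCompletionEquiv {R : Type*} [CommRing R] [IsNoetherianRing R]
    {I J : Ideal R} (hJI : J ≤ I) (hI : I ≤ Ideal.jacobson ⊥) :
    AdicCompletion I R ≃+*
      AdicCompletion (I.map (algebraMap R (AdicCompletion J R))) (AdicCompletion J R) := by
  let S := AdicCompletion J R
  let T := AdicCompletion (I.map (algebraMap R S)) S
  have map_eq : I.map (algebraMap R T) = (I.map (algebraMap R S)).map (algebraMap S T) := by
    rw [Ideal.map_map, ← IsScalarTower.algebraMap_eq]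
  have : IsAdicComplete (I.map (algebraMap R T)) T := by
    rw [map_eq]
    exact AdicCompletion.isAdicComplete_self _ (IsNoetherian.noetherian _)
  have := faithfullyFlat_adicCompletion (hJI.trans hI)
  have := faithfullyFlat_adicCompletion (map_algebraMap_adicCompletion_le_jacobson (I := J) hI)
  have : Module.FaithfullyFlat R T := .trans R S T
  refine RingEquiv.ofBijective (completionLift I T) ⟨completionLift_injective I T,
    completionLift_surjective I T (IsNoetherian.noetherian I) ?_⟩
  rw [map_eq]
  exact surjective_algebraMap_quotient_map_trans _
    (surjective_algebraMap_quotient_of_le (surjective_algebraMap_adicCompletion_quotient J)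
      (Ideal.map_mono hJI))
    (surjective_algebraMap_adicCompletion_quotient _)

end IteratedCompletion

section Ascent

theorem surjective_algebraMap_adicCompletion_sup_quotient {S : Type*} [CommRing S]
    [IsNoetherianRing S] (J : Ideal S) [IsAdicComplete J S] (x : S) :
    Function.Surjective (algebraMap S (AdicCompletion (J ⊔ Ideal.span {x}) S ⧸
      Ideal.span {algebraMap S (AdicCompletion (J ⊔ Ideal.span {x}) S) x})) := by
  let T := AdicCompletion (J ⊔ Ideal.span {x}) S
  let Q := T ⧸ Ideal.span {algebraMap S T x}
  have := AdicCompletion.isAdicComplete_self (J ⊔ Ideal.span {x}) (IsNoetherian.noetherian _)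
  have J_map_le : J.map (algebraMap S T) ≤ Ideal.jacobson ⊥ :=
    (Ideal.map_mono (le_sup_left (b := Ideal.span {x}))).trans (IsAdicComplete.le_jacobson_bot _)
  have map_Q_eq : J.map (algebraMap S Q) = (J.map (algebraMap S T)).map (algebraMap T Q) := by
    rw [Ideal.map_map, ← IsScalarTower.algebraMap_eq]
  have : IsHausdorff (J.map (algebraMap S Q)) Q := by
    rw [map_Q_eq, IsHausdorff.map_algebraMap_iff]
    exact IsHausdorff.of_le_jacobson _ Q J_map_le
  refine surjective_of_mk_map_comp_surjective (I := J) (algebraMap S Q) fun y => ?_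
  obtain ⟨t, rfl⟩ := (Ideal.Quotient.mk_surjective.comp Ideal.Quotient.mk_surjective) y
  obtain ⟨s, hs⟩ := surjective_algebraMap_adicCompletion_quotient (J ⊔ Ideal.span {x})
    (Ideal.Quotient.mk _ t)
  refine ⟨s, (Ideal.Quotient.mk_eq_mk_iff_sub_mem _ _).2 ?_⟩
  have sub_mem := Ideal.mem_map_of_mem (algebraMap T Q)
    ((Ideal.Quotient.mk_eq_mk_iff_sub_mem _ _).1 hs)
  have map_span_eq_bot : ((Ideal.span {x}).map (algebraMap S T)).map (algebraMap T Q) = ⊥ := by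
    rw [Ideal.map_span, Set.image_singleton]
    exact Ideal.map_quotient_self _
  rwa [Ideal.map_sup, Ideal.map_sup, map_span_eq_bot, sup_bot_eq, ← map_Q_eq] at sub_mem

variable {R : Type} [CommRing R] [IsNoetherianRing R]

theorem SAC.adicCompletion_sup_of_isAdicComplete (J : Ideal R) [IsAdicComplete J R] {x : R}
    (hx : J ⊔ Ideal.span {x} ≤ Ideal.jacobson ⊥) (h : SAC R) :
    SAC (AdicCompletion (J ⊔ Ideal.span {x}) R) := by
  have := faithfullyFlat_adicCompletion hx
  have hx_mem : x ∈ J ⊔ Ideal.span {x} :=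
    Ideal.mem_sup_right (Ideal.mem_span_singleton_self x)
  exact h.of_surjective_algebraMap_quotient
    (map_algebraMap_adicCompletion_le_jacobson hx (Ideal.mem_map_of_mem _ hx_mem))
    (surjective_algebraMap_adicCompletion_sup_quotient J x)

theorem SAC.adicCompletion_sup_span_singleton {J : Ideal R} {x : R}
    (hx : J ⊔ Ideal.span {x} ≤ Ideal.jacobson ⊥) (h : SAC (AdicCompletion J R)) :
    SAC (AdicCompletion (J ⊔ Ideal.span {x}) R) := by
  let S := AdicCompletion J R
  have map_eq : (J ⊔ Ideal.span {x}).map (algebraMap R S) =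
      J.map (algebraMap R S) ⊔ Ideal.span {algebraMap R S x} := by
    rw [Ideal.map_sup, Ideal.map_span, Set.image_singleton]
  have map_le := map_algebraMap_adicCompletion_le_jacobson (I := J) hx
  have : IsAdicComplete (J.map (algebraMap R S)) S :=
    AdicCompletion.isAdicComplete_self J (IsNoetherian.noetherian J)
  have e := iteratedCompletionEquiv (J := J) le_sup_left hx
  rw [map_eq] at map_le e
  exact (h.adicCompletion_sup_of_isAdicComplete _ map_le).of_ringEquiv e

theorem SAC.adicCompletion_sup {I J : Ideal R} (hJI : J ⊔ I ≤ Ideal.jacobson ⊥)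
    (h : SAC (AdicCompletion J R)) : SAC (AdicCompletion (J ⊔ I) R) := by
  induction I, IsNoetherian.noetherian I using Submodule.fg_induction generalizing J with
  | singleton x => exact h.adicCompletion_sup_span_singleton hJI
  | sup I₁ I₂ _ _ ih₁ ih₂ =>
    rw [← sup_assoc] at hJI ⊢
    exact ih₂ hJI (ih₁ (le_sup_left.trans hJI) h)

theorem SAC.adicCompletion {I : Ideal R} (hI : I ≤ Ideal.jacobson ⊥) (h : SAC R) :
    SAC (AdicCompletion I R) := by
  have hbot : SAC (AdicCompletion (⊥ : Ideal R) R) :=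
    h.of_ringEquiv (AdicCompletion.ofAlgEquiv ⊥).symm.toRingEquiv
  rw [← bot_sup_eq I] at hI ⊢
  exact hbot.adicCompletion_sup hI

end Ascent

theorem stmt_15_general (R : Type) [CommRing R] [IsNoetherianRing R] (I : Ideal R)
    (hI : I ≤ Ideal.jacobson ⊥) : SAC R ↔ SAC (AdicCompletion I R) :=
  have := faithfullyFlat_adicCompletion hI
  ⟨SAC.adicCompletion hI, SAC.of_faithfullyFlat⟩

/-- A Noetherian local ring satisfies (SAC) iff its maximal-adic completion does. -/
theorem stmt_15 (R : Type) [CommRing R] [IsNoetherianRing R] [IsLocalRing R] :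
    SAC R ↔ SAC (AdicCompletion (IsLocalRing.maximalIdeal R) R) :=
  stmt_15_general R _ (IsLocalRing.maximalIdeal_le_jacobson _)
end

section
/- Every local complete intersection ring satisfies (SAC): if R is a Noetherian local ring whose completion is a quotient of a regular local ring by a regular sequence, then for every finitely generated R-module M, Ext_R^{>0}(M,R) = 0 and Ext_R^{≫0}(M,M) = 0 imply Ext_R^{>0}(M,M) = 0. -/
open CategoryTheory

/-!
Finite projective dimension of `M` is forced by `Ext^i(M, M) = 0` for `i ≫ 0` over a regular local
ring, and this property passes to the quotient by a nonzerodivisor `x`: for a first syzygy `K` of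
the `Q ⧸ (x)`-module `M` over `Q`, the snake lemma gives an exact sequence
`0 → M → K ⧸ xK → F ⧸ xF → M → 0`, that is, a class `χ ∈ Ext²(M, M)`. Because
`Ext^i_{Q ⧸ (x)}(K ⧸ xK, M) = Ext^i_Q(K, M)`, vanishing of the high self-extensions lifts to `Q`, so
`K`, and with it `K ⧸ xK`, has finite projective dimension. Then `χ` acts injectively on
`Ext^i(M, -)` for large `i`, while its large powers vanish, so `M` has finite projective dimension.
The property descends along faithfully flat maps such as `R → R̂`, and finite projective dimension
together with `Ext^{>0}(M, R) = 0` makes `M` projective.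
-/

universe w v u

section AbelianCategory

open Abelian

variable {C : Type u} [Category.{v} C] [Abelian C] [HasExt.{w} C]

theorem subsingleton_ext_add_two_iff_of_shortExact {S : ShortComplex C} (hS : S.ShortExact)
    [Projective S.X₂] (N : C) (n : ℕ) :
    Subsingleton (Ext S.X₃ N (n + 2)) ↔ Subsingleton (Ext S.X₁ N (n + 1)) := by
  have hX₂ (k : ℕ) : Subsingleton (Ext S.X₂ N (k + 1)) := Ext.subsingleton_of_projective _ _ _
  constructor <;> intro h <;> refine subsingleton_of_forall_eq 0 fun y ↦ ?_
  · obtain ⟨z, rfl⟩ := Ext.contravariant_sequence_exact₁ hS N y (add_comm 1 _)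
      (Subsingleton.elim _ _)
    rw [Subsingleton.elim z 0, Ext.comp_zero]
  · obtain ⟨z, rfl⟩ := Ext.contravariant_sequence_exact₃ hS N y (Subsingleton.elim _ _)
      (add_comm 1 _)
    rw [Subsingleton.elim z 0, Ext.comp_zero]

theorem subsingleton_ext_one_iff_of_shortExact {S : ShortComplex C} (hS : S.ShortExact)
    [Projective S.X₂] (N : C) :
    Subsingleton (Ext S.X₃ N 1) ↔ ∀ u : S.X₁ ⟶ N, ∃ v : S.X₂ ⟶ N, S.f ≫ v = u := by
  constructor
  · intro h u
    obtain ⟨y, hy⟩ := Ext.contravariant_sequence_exact₁ hS N (Ext.mk₀ u) (add_comm 1 0)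
      (Subsingleton.elim _ _)
    obtain ⟨v, rfl⟩ := (Ext.mk₀_bijective _ _).surjective y
    rw [Ext.mk₀_comp_mk₀] at hy
    exact ⟨v, (Ext.mk₀_bijective _ _).injective hy⟩
  · intro h
    refine subsingleton_of_forall_eq 0 fun x ↦ ?_
    obtain ⟨y, rfl⟩ := Ext.contravariant_sequence_exact₃ hS N x (Ext.eq_zero_of_projective _)
      (add_comm 1 0)
    obtain ⟨u, rfl⟩ := (Ext.mk₀_bijective _ _).surjective y
    obtain ⟨v, rfl⟩ := h u
    rw [← Ext.mk₀_comp_mk₀, hS.extClass_comp_assoc]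

theorem hasProjectiveDimensionLT_of_comp_eq_zero_imp {M : C} {d n : ℕ} (hd : 0 < d)
    (χ : Ext M M d)
    (hχ : ∀ ⦃i : ℕ⦄, n ≤ i → ∀ (N : C) (y : Ext M N i), χ.comp y rfl = 0 → y = 0)
    (hM : ∃ m, ∀ i, m < i → Subsingleton (Ext M M i)) :
    HasProjectiveDimensionLT M n := by
  rw [hasProjectiveDimensionLT_iff]
  have exists_power (j : ℕ) : ∃ e ≥ j, ∃ z : Ext M M e, ∀ ⦃i k : ℕ⦄ (hk : e + i = k), n ≤ i →
      ∀ (N : C) (y : Ext M N i), z.comp y hk = 0 → y = 0 := by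
    induction j with
    | zero =>
      refine ⟨0, le_rfl, Ext.mk₀ (𝟙 M), fun i k hk _ N y hy ↦ ?_⟩
      obtain rfl : k = i := by lia
      rwa [Ext.mk₀_id_comp] at hy
    | succ j ih =>
      obtain ⟨e, he, z, hz⟩ := ih
      refine ⟨d + e, by lia, χ.comp z rfl, fun i k hk hi N y hy ↦ hz rfl hi N y ?_⟩
      obtain rfl : d + (e + i) = k := by lia
      rw [Ext.comp_assoc _ _ _ _ rfl (by lia)] at hy
      exact hχ (by lia) N _ hy
  obtain ⟨m, hm⟩ := hM
  obtain ⟨e, he, z, hz⟩ := exists_power (m + 1)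
  have : Subsingleton (Ext M M e) := hm e he
  intro i hi N y
  exact hz rfl hi N y (by rw [Subsingleton.elim z 0, Ext.zero_comp])

theorem hasProjectiveDimensionLT_of_selfExt_eventually_subsingleton {M E W F : C}
    {a : M ⟶ E} {b : E ⟶ W} {c : W ⟶ F} {d : F ⟶ M} {wab : a ≫ b = 0} {wcd : c ≫ d = 0}
    (hab : (ShortComplex.mk a b wab).ShortExact) (hcd : (ShortComplex.mk c d wcd).ShortExact)
    [Projective F] {n : ℕ} [HasProjectiveDimensionLT E n]
    (hM : ∃ m, ∀ i, m < i → Subsingleton (Ext M M i)) :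
    HasProjectiveDimensionLT M n := by
  refine hasProjectiveDimensionLT_of_comp_eq_zero_imp two_pos
    (hcd.extClass.comp hab.extClass rfl) (fun i hi N y hy ↦ ?_) hM
  rw [Ext.comp_assoc hcd.extClass hab.extClass y rfl (add_comm 1 i) (by ring)] at hy
  obtain ⟨p, hp⟩ := Ext.contravariant_sequence_exact₁ hcd N _ _ hy
  rw [p.eq_zero_of_projective, Ext.comp_zero] at hp
  obtain ⟨q, rfl⟩ := Ext.contravariant_sequence_exact₁ hab N _ _ hp.symm
  have : Subsingleton (Ext E N i) := HasProjectiveDimensionLT.subsingleton E n i hi N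
  rw [Subsingleton.elim q 0, Ext.comp_zero]

theorem subsingleton_ext_add_one_of_shortExact_of_shortExact {M E W F : C}
    {a : M ⟶ E} {b : E ⟶ W} {c : W ⟶ F} {d : F ⟶ M} {wab : a ≫ b = 0} {wcd : c ≫ d = 0}
    (hab : (ShortComplex.mk a b wab).ShortExact) (hcd : (ShortComplex.mk c d wcd).ShortExact)
    [Projective F] {N : C} {n : ℕ} (h₁ : Subsingleton (Ext M N (n + 1)))
    (h₂ : Subsingleton (Ext M N (n + 2))) : Subsingleton (Ext E N (n + 1)) := by
  have hW : Subsingleton (Ext W N (n + 1)) :=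
    (subsingleton_ext_add_two_iff_of_shortExact hcd N n).1 h₂
  refine subsingleton_of_forall_eq 0 fun y ↦ ?_
  obtain ⟨z, rfl⟩ := Ext.contravariant_sequence_exact₂ hab N y (Subsingleton.elim _ _)
  rw [Subsingleton.elim z 0, Ext.comp_zero]

end AbelianCategory

theorem subsingleton_ext_one_iff_of_moduleCat_shortExact {R : Type u} [CommRing R]
    {S : ShortComplex (ModuleCat.{u} R)} (hS : S.ShortExact) [Projective S.X₂]
    (N : ModuleCat.{u} R) :
    Subsingleton (Abelian.Ext S.X₃ N 1) ↔
      ∀ u : S.X₁ →ₗ[R] N, ∃ v : S.X₂ →ₗ[R] N, v ∘ₗ S.f.hom = u := by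
  rw [subsingleton_ext_one_iff_of_shortExact hS]
  simp only [(ModuleCat.homEquiv (M := S.X₁)).forall_congr_left,
    (ModuleCat.homEquiv (M := S.X₂)).exists_congr_left, ModuleCat.hom_ext_iff]
  rfl

section QuotientByRegularElement

open Abelian Function

open scoped Pointwise

variable {Q : Type u} [CommRing Q] {x : Q}
  {K L F M N : Type u} [AddCommGroup K] [Module Q K] [AddCommGroup L] [Module Q L]
  [AddCommGroup F] [Module Q F]

variable (x) in
/-- The `Q ⧸ (x)`-linear map `K ⧸ xK → L ⧸ xL` induced by a `Q`-linear map `K → L`. -/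
def quotSMulTopMap (f : K →ₗ[Q] L) :
    QuotSMulTop x K →ₗ[Q ⧸ Ideal.span {x}] QuotSMulTop x L :=
  (QuotSMulTop.map x f).extendScalarsOfSurjective Ideal.Quotient.mk_surjective

variable (x) in
/-- The complex `ker f ⧸ x (ker f) → F ⧸ xF → K ⧸ xK` of `Q ⧸ (x)`-modules attached to a
`Q`-linear map `f : F → K`. -/
abbrev quotSMulTopShortComplexKer (f : F →ₗ[Q] K) :
    ShortComplex (ModuleCat.{u} (Q ⧸ Ideal.span {x})) :=
  ModuleCat.shortComplexOfCompEqZero (quotSMulTopMap x (LinearMap.ker f).subtype)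
    (quotSMulTopMap x f) <| LinearMap.ext <| (Submodule.mkQ_surjective _).forall.2 fun k ↦
      congrArg Submodule.Quotient.mk k.2

theorem shortExact_quotSMulTopShortComplexKer {f : F →ₗ[Q] K} (hf : Surjective f)
    (hK : IsSMulRegular K x) : (quotSMulTopShortComplexKer x f).ShortExact := by
  have hexact : Exact (LinearMap.ker f).subtype f := LinearMap.exact_subtype_ker_map f
  refine ModuleCat.shortComplex_shortExact _ (QuotSMulTop.map_exact x hexact hf) ?_
    (QuotSMulTop.map_surjective x hf)
  have h0 : Exact (0 : PUnit →ₗ[Q] LinearMap.ker f) (LinearMap.ker f).subtype :=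
    (LinearMap.exact_zero_iff_injective _ _).2 (Submodule.subtype_injective _)
  have := QuotSMulTop.map_first_exact_on_four_term_exact_of_isSMulRegular_last h0 hexact hK
  rw [map_zero, LinearMap.exact_zero_iff_injective] at this
  exact this

variable [AddCommGroup N] [Module Q N] [Module (Q ⧸ Ideal.span {x}) N]
  [IsScalarTower Q (Q ⧸ Ideal.span {x}) N]

variable (x) in
/-- The `Q ⧸ (x)`-linear map `K ⧸ xK → N` through which a `Q`-linear map from `K` to a
`Q ⧸ (x)`-module `N` factors. -/
def quotSMulTopLift (u : K →ₗ[Q] N) : QuotSMulTop x K →ₗ[Q ⧸ Ideal.span {x}] N :=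
  (Submodule.liftQ (x • ⊤) u (by
    rintro _ ⟨k, -, rfl⟩
    simp [← algebraMap_smul (Q ⧸ Ideal.span {x}) x (u k)])).extendScalarsOfSurjective
      Ideal.Quotient.mk_surjective

theorem forall_exists_quotSMulTopMap_extension_iff (f : K →ₗ[Q] L) :
    (∀ u : QuotSMulTop x K →ₗ[Q ⧸ Ideal.span {x}] N,
      ∃ v : QuotSMulTop x L →ₗ[Q ⧸ Ideal.span {x}] N, v ∘ₗ quotSMulTopMap x f = u) ↔
    ∀ u : K →ₗ[Q] N, ∃ v : L →ₗ[Q] N, v ∘ₗ f = u := by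
  constructor
  · intro h u
    obtain ⟨v, hv⟩ := h (quotSMulTopLift x u)
    exact ⟨v.restrictScalars Q ∘ₗ Submodule.mkQ _,
      LinearMap.ext fun k ↦ LinearMap.congr_fun hv (Submodule.Quotient.mk k)⟩
  · intro h u
    obtain ⟨v, hv⟩ := h (u.restrictScalars Q ∘ₗ Submodule.mkQ _)
    exact ⟨quotSMulTopLift x v,
      LinearMap.ext <| (Submodule.mkQ_surjective _).forall.2 <| LinearMap.congr_fun hv⟩

theorem subsingleton_ext_quotSMulTop_iff (hx : x ∈ nonZeroDivisors Q) (hK : IsSMulRegular K x)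
    (n : ℕ) :
    Subsingleton (Ext (ModuleCat.of (Q ⧸ Ideal.span {x}) (QuotSMulTop x K))
      (ModuleCat.of (Q ⧸ Ideal.span {x}) N) (n + 1)) ↔
    Subsingleton (Ext (ModuleCat.of Q K) (ModuleCat.of Q N) (n + 1)) := by
  induction n generalizing K with
  | zero =>
    have hf : Surjective (Finsupp.linearCombination Q (id : K → K)) :=
      Finsupp.linearCombination_id_surjective Q K
    rw [subsingleton_ext_one_iff_of_moduleCat_shortExact
        (shortExact_quotSMulTopShortComplexKer hf hK),
      subsingleton_ext_one_iff_of_moduleCat_shortExact (LinearMap.shortExact_shortComplexKer hf)]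
    exact forall_exists_quotSMulTopMap_extension_iff _
  | succ n ih =>
    have hf : Surjective (Finsupp.linearCombination Q (id : K → K)) :=
      Finsupp.linearCombination_id_surjective Q K
    rw [subsingleton_ext_add_two_iff_of_shortExact (shortExact_quotSMulTopShortComplexKer hf hK),
      subsingleton_ext_add_two_iff_of_shortExact (LinearMap.shortExact_shortComplexKer hf)]
    exact ih ((Module.Flat.isSMulRegular_of_nonZeroDivisors hx).submodule _ _)

theorem hasProjectiveDimensionLT_quotSMulTop (hx : x ∈ nonZeroDivisors Q)
    (hK : IsSMulRegular K x) (n : ℕ) [HasProjectiveDimensionLT (ModuleCat.of Q K) (n + 1)] :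
    HasProjectiveDimensionLT (ModuleCat.of (Q ⧸ Ideal.span {x}) (QuotSMulTop x K)) (n + 1) := by
  rw [hasProjectiveDimensionLT_iff]
  intro i hi N
  obtain ⟨j, rfl⟩ := Nat.exists_eq_add_of_le' (Nat.le_of_add_left_le hi)
  let : Module Q N := Module.compHom N (algebraMap Q (Q ⧸ Ideal.span {x}))
  have : IsScalarTower Q (Q ⧸ Ideal.span {x}) N := IsScalarTower.of_compHom Q _ N
  have := (subsingleton_ext_quotSMulTop_iff (N := N) hx hK j).2
    (HasProjectiveDimensionLT.subsingleton _ (n + 1) _ hi _)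
  exact fun y ↦ Subsingleton.elim y 0

variable [AddCommGroup M] [Module Q M] [Module (Q ⧸ Ideal.span {x}) M]
  [IsScalarTower Q (Q ⧸ Ideal.span {x}) M]

theorem exists_injective_exact_quotSMulTopMap_ker_subtype (hF : IsSMulRegular F x)
    {f : F →ₗ[Q] M} (hf : Surjective f) :
    ∃ a : M →ₗ[Q ⧸ Ideal.span {x}] QuotSMulTop x (LinearMap.ker f),
      Injective a ∧ Exact a (quotSMulTopMap x (LinearMap.ker f).subtype) := by
  have hxM : LinearMap.lsmul Q M x = 0 := LinearMap.ext fun m ↦ by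
    simp [← algebraMap_smul (Q ⧸ Ideal.span {x}) x m]
  have hexact : Exact (LinearMap.ker f).subtype f := LinearMap.exact_subtype_ker_map f
  have hinj : Injective (LinearMap.ker f).subtype := Submodule.subtype_injective _
  have hmkQ (A : Type u) [AddCommGroup A] [Module Q A] :
      Exact (LinearMap.lsmul Q A x) (x • (⊤ : Submodule Q A)).mkQ := by
    rw [LinearMap.exact_iff, Submodule.ker_mkQ]
    exact Submodule.map_top _
  have hid : Exact (LinearMap.id : M →ₗ[Q] M) (LinearMap.lsmul Q M x) := by
    simp [hxM, Exact]
  have hzero : Exact (0 : PUnit →ₗ[Q] F) (LinearMap.lsmul Q F x) :=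
    (LinearMap.exact_zero_iff_injective _ _).2 hF
  let a := SnakeLemma.δ' _ (LinearMap.lsmul Q F x) (LinearMap.lsmul Q M x) _ f hexact _ f hexact rfl
    (LinearMap.ext fun y ↦ by simp) LinearMap.id hid (Submodule.mkQ _)
    (hmkQ (LinearMap.ker f)) hf hinj
  have hexact_left : Exact (0 : PUnit →ₗ[Q] M) a :=
    SnakeLemma.exact_δ'_right _ _ _ _ _ _ _ _ _ _ _ _ hzero _ _ _ _ _ _ _
      (by simp only [LinearMap.comp_zero]) injective_id
  have hexact_right : Exact a (QuotSMulTop.map x (LinearMap.ker f).subtype) :=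
    SnakeLemma.exact_δ'_left _ _ _ _ _ _ _ _ _ _ _ _ _ _ _ (Submodule.mkQ _) (hmkQ F) _ _ _ rfl
      (Submodule.mkQ_surjective _)
  exact ⟨a.extendScalarsOfSurjective Ideal.Quotient.mk_surjective,
    (LinearMap.exact_zero_iff_injective PUnit a).1 hexact_left, hexact_right⟩

theorem exact_quotSMulTopMap_ker_subtype_quotSMulTopLift (f : F →ₗ[Q] M) :
    Exact (quotSMulTopMap x (LinearMap.ker f).subtype) (quotSMulTopLift x f) := by
  refine (Submodule.mkQ_surjective _).forall.2 fun y ↦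
    ⟨fun hy ↦ ⟨Submodule.Quotient.mk ⟨y, hy⟩, rfl⟩, ?_⟩
  rintro ⟨t, ht⟩
  obtain ⟨k, rfl⟩ := Submodule.mkQ_surjective _ t
  rw [← ht]
  exact k.2

theorem exists_shortExact_quotSMulTop_ker (hF : IsSMulRegular F x)
    {f : F →ₗ[Q] M} (hf : Surjective f) :
    ∃ (W : ModuleCat.{u} (Q ⧸ Ideal.span {x}))
      (a : ModuleCat.of _ M ⟶ ModuleCat.of _ (QuotSMulTop x (LinearMap.ker f)))
      (b : ModuleCat.of _ (QuotSMulTop x (LinearMap.ker f)) ⟶ W)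
      (c : W ⟶ ModuleCat.of _ (QuotSMulTop x F))
      (d : ModuleCat.of _ (QuotSMulTop x F) ⟶ ModuleCat.of _ M) (wab : a ≫ b = 0)
      (wcd : c ≫ d = 0), (ShortComplex.mk a b wab).ShortExact ∧
        (ShortComplex.mk c d wcd).ShortExact := by
  let φ := quotSMulTopMap x (LinearMap.ker f).subtype
  obtain ⟨a, ha, haφ⟩ := exists_injective_exact_quotSMulTopMap_ker_subtype hF hf
  have hab : Exact a φ.rangeRestrict := fun y ↦ Subtype.ext_iff.trans (haφ y)
  have hcd : Exact φ.range.subtype (quotSMulTopLift x f) := LinearMap.exact_iff.2 <|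
    (exact_quotSMulTopMap_ker_subtype_quotSMulTopLift f).linearMap_ker_eq.trans
      (Submodule.range_subtype _).symm
  exact ⟨.of _ φ.range, ModuleCat.ofHom a, ModuleCat.ofHom φ.rangeRestrict,
    ModuleCat.ofHom φ.range.subtype, ModuleCat.ofHom (quotSMulTopLift x f),
    ModuleCat.hom_ext hab.linearMap_comp_eq_zero, ModuleCat.hom_ext hcd.linearMap_comp_eq_zero,
    ModuleCat.shortComplex_shortExact _ hab ha φ.surjective_rangeRestrict,
    ModuleCat.shortComplex_shortExact _ hcd φ.range.subtype_injective
      (Surjective.of_comp (g := Submodule.mkQ (x • ⊤)) hf)⟩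

end QuotientByRegularElement

section SelfExt

open Function Abelian

/-- Every finitely generated `R`-module has finite projective dimension. For Noetherian local
`R` this is the homological form of regularity. -/
def FiniteModulesHaveFiniteProjDim (R : Type u) [CommRing R] : Prop :=
  ∀ (M : ModuleCat.{u} R) [Module.Finite R M], ∃ n, HasProjectiveDimensionLT M n

/-- Every finitely generated `R`-module `M` with `Ext^i(M, M) = 0` for `i ≫ 0` has finite
projective dimension. This passes from `R` to its quotients by regular sequences. -/
def SelfExtDetectsFiniteProjDim (R : Type u) [CommRing R] : Prop :=
  ∀ (M : ModuleCat.{u} R) [Module.Finite R M],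
    (∃ m, ∀ i, m < i → Subsingleton (Ext M M i)) → ∃ n, HasProjectiveDimensionLT M n

theorem FiniteModulesHaveFiniteProjDim.selfExtDetectsFiniteProjDim {R : Type u} [CommRing R]
    (h : FiniteModulesHaveFiniteProjDim R) : SelfExtDetectsFiniteProjDim R :=
  fun M _ _ ↦ h M

variable {Q : Type u} [CommRing Q] {x : Q}

theorem exists_hasProjectiveDimensionLT_add_one_ker {K F : Type u} [AddCommGroup K] [Module Q K]
    [AddCommGroup F] [Module Q F] [Module.Projective Q F] {f : F →ₗ[Q] K} (hf : Surjective f)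
    (hK : ∃ n, HasProjectiveDimensionLT (ModuleCat.of Q K) n) :
    ∃ n, HasProjectiveDimensionLT (ModuleCat.of Q (LinearMap.ker f)) (n + 1) := by
  obtain ⟨n, hn⟩ := hK
  exact ⟨n, ((LinearMap.shortExact_shortComplexKer hf).hasProjectiveDimensionLT_X₃_iff n
    (inferInstanceAs (Projective (ModuleCat.of Q F)))).1
      (hasProjectiveDimensionLT_of_ge _ n _ (by lia))⟩

theorem SelfExtDetectsFiniteProjDim.quotient_span_singleton
    (hQ : SelfExtDetectsFiniteProjDim Q) (hx : x ∈ nonZeroDivisors Q) :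
    SelfExtDetectsFiniteProjDim (Q ⧸ Ideal.span {x}) := by
  intro M _ hM
  let : Module Q M := Module.compHom M (algebraMap Q (Q ⧸ Ideal.span {x}))
  have : IsScalarTower Q (Q ⧸ Ideal.span {x}) M := IsScalarTower.of_compHom Q _ M
  have : Module.Finite Q M := .trans (Q ⧸ Ideal.span {x}) M
  obtain ⟨F, _, _, _, _, f, hf⟩ := Module.exists_finite_presentation Q M
  have hF : IsSMulRegular F x := Module.Flat.isSMulRegular_of_nonZeroDivisors hx
  have hK : IsSMulRegular (LinearMap.ker f) x := hF.submodule _ _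
  obtain ⟨W, a, b, c, d, wab, wcd, hab, hcd⟩ := exists_shortExact_quotSMulTop_ker hF hf
  have hMQ : ∃ m, ∀ i, m < i → Subsingleton (Ext (ModuleCat.of Q M) (ModuleCat.of Q M) i) := by
    obtain ⟨m, hm⟩ := hM
    refine ⟨m + 1, fun i hi ↦ ?_⟩
    obtain ⟨j, rfl⟩ := Nat.exists_eq_add_of_le' (show 2 ≤ i by lia)
    refine (subsingleton_ext_add_two_iff_of_shortExact (LinearMap.shortExact_shortComplexKer hf)
      _ _).2 ((subsingleton_ext_quotSMulTop_iff hx hK j).1 ?_)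
    exact subsingleton_ext_add_one_of_shortExact_of_shortExact hab hcd
      (hm _ (by lia)) (hm _ (by lia))
  obtain ⟨n, hn⟩ := exists_hasProjectiveDimensionLT_add_one_ker hf (hQ (ModuleCat.of Q M) hMQ)
  have := hasProjectiveDimensionLT_quotSMulTop hx hK n
  exact ⟨n + 1, hasProjectiveDimensionLT_of_selfExt_eventually_subsingleton hab hcd hM⟩

end SelfExt

section FaithfullyFlat

open Function Abelian TensorProduct

variable {R : Type u} [CommRing R] (S : Type u) [CommRing S] [Algebra R S]
  {K L F N : Type u} [AddCommGroup K] [Module R K] [AddCommGroup L] [Module R L]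
  [AddCommGroup F] [Module R F] [AddCommGroup N] [Module R N]

/-- The complex `S ⊗ ker f → S ⊗ F → S ⊗ K` of `S`-modules attached to an `R`-linear map
`f : F → K`. -/
abbrev baseChangeShortComplexKer (f : F →ₗ[R] K) : ShortComplex (ModuleCat.{u} S) :=
  ModuleCat.shortComplexOfCompEqZero ((LinearMap.ker f).subtype.baseChange S) (f.baseChange S) <| by
    rw [← LinearMap.baseChange_comp, f.comp_ker_subtype, LinearMap.baseChange_zero]

theorem shortExact_baseChangeShortComplexKer [Module.Flat R S] {f : F →ₗ[R] K}
    (hf : Surjective f) : (baseChangeShortComplexKer S f).ShortExact :=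
  ModuleCat.shortComplex_shortExact _ (lTensor_exact S f.exact_subtype_ker_map hf)
    (Module.Flat.lTensor_preserves_injective_linearMap _ (Submodule.subtype_injective _))
    (LinearMap.lTensor_surjective S hf)

theorem forall_exists_baseChange_extension_iff [Module.FaithfullyFlat R S]
    [Module.FinitePresentation R K] [Module.FinitePresentation R L] (f : K →ₗ[R] L) :
    (∀ u : S ⊗[R] K →ₗ[S] S ⊗[R] N, ∃ v : S ⊗[R] L →ₗ[S] S ⊗[R] N, v ∘ₗ f.baseChange S = u) ↔
      ∀ u : K →ₗ[R] N, ∃ v : L →ₗ[R] N, v ∘ₗ f = u := by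
  have hK := Module.FinitePresentation.isBaseChange_map R K N S
  have hL := Module.FinitePresentation.isBaseChange_map R L N S
  have lcomp_baseChange : ⇑((f.baseChange S).lcomp S (S ⊗[R] N)) ∘ hL.equiv =
      hK.equiv ∘ (f.lcomp R N).baseChange S := by
    simp only [← LinearEquiv.coe_coe, ← LinearMap.coe_comp, DFunLike.coe_fn_eq]
    ext u a
    simp [IsBaseChange.equiv_tmul]
  change Surjective ((f.baseChange S).lcomp S (S ⊗[R] N)) ↔ Surjective (f.lcomp R N)
  rw [← hL.equiv.surjective.of_comp_iff, lcomp_baseChange, EquivLike.comp_surjective]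
  exact Module.FaithfullyFlat.lTensor_surjective_iff_surjective R S _

theorem subsingleton_ext_baseChange_iff [IsNoetherianRing R] [Module.FaithfullyFlat R S]
    [Module.Finite R K] (n : ℕ) :
    Subsingleton (Ext (ModuleCat.of S (S ⊗[R] K)) (ModuleCat.of S (S ⊗[R] N)) (n + 1)) ↔
      Subsingleton (Ext (ModuleCat.of R K) (ModuleCat.of R N) (n + 1)) := by
  induction n generalizing K with
  | zero =>
    obtain ⟨F, _, _, _, _, f, hf⟩ := Module.exists_finite_presentation R K
    have (A : Type u) [AddCommGroup A] [Module R A] [Module.Finite R A] :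
      Module.FinitePresentation R A := Module.finitePresentation_of_finite R A
    rw [subsingleton_ext_one_iff_of_moduleCat_shortExact
        (shortExact_baseChangeShortComplexKer S hf),
      subsingleton_ext_one_iff_of_moduleCat_shortExact (LinearMap.shortExact_shortComplexKer hf)]
    exact forall_exists_baseChange_extension_iff S _
  | succ n ih =>
    obtain ⟨F, _, _, _, _, f, hf⟩ := Module.exists_finite_presentation R K
    rw [subsingleton_ext_add_two_iff_of_shortExact (shortExact_baseChangeShortComplexKer S hf),
      subsingleton_ext_add_two_iff_of_shortExact (LinearMap.shortExact_shortComplexKer hf)]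
    exact ih

variable {S} in
theorem SelfExtDetectsFiniteProjDim.of_faithfullyFlat [IsNoetherianRing R]
    [Module.FaithfullyFlat R S] (hS : SelfExtDetectsFiniteProjDim S) :
    SelfExtDetectsFiniteProjDim R := by
  intro M _ ⟨m, hm⟩
  have hself : ∃ m, ∀ i, m < i → Subsingleton
      (Ext (ModuleCat.of S (S ⊗[R] M)) (ModuleCat.of S (S ⊗[R] M)) i) := by
    refine ⟨m, fun i hi ↦ ?_⟩
    obtain ⟨j, rfl⟩ := Nat.exists_eq_add_of_le' (Nat.one_le_of_lt hi)
    exact (subsingleton_ext_baseChange_iff S j).2 (hm _ hi)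
  obtain ⟨n, hn⟩ := hS (ModuleCat.of S (S ⊗[R] M)) hself
  refine ⟨n + 1, (hasProjectiveDimensionLT_iff _ _).2 fun i hi N ↦ ?_⟩
  obtain ⟨j, rfl⟩ := Nat.exists_eq_add_of_le' (Nat.one_le_of_lt hi)
  have := (subsingleton_ext_baseChange_iff (R := R) (K := M) (N := N) S j).1
    (HasProjectiveDimensionLT.subsingleton _ n _ (by lia) _)
  exact fun y ↦ Subsingleton.elim y 0

theorem SelfExtDetectsFiniteProjDim.of_ringEquiv {S : Type u} [CommRing S] [IsNoetherianRing S]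
    (e : S ≃+* R) (hR : SelfExtDetectsFiniteProjDim R) : SelfExtDetectsFiniteProjDim S := by
  algebraize [e.toRingHom]
  have : Module.FaithfullyFlat S R := RingHom.FaithfullyFlat.of_bijective e.bijective
  exact hR.of_faithfullyFlat

end FaithfullyFlat

section Regular

open Function Abelian RingTheory.Sequence
open scoped Pointwise

variable {Q : Type u} [CommRing Q] {x : Q}

theorem isLocalRing_quotient_span_singleton [IsLocalRing Q]
    (hxm : x ∈ IsLocalRing.maximalIdeal Q) : IsLocalRing (Q ⧸ Ideal.span {x}) := by
  have : Nontrivial (Q ⧸ Ideal.span {x}) := Ideal.Quotient.nontrivial_iff.2 <|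
    ((Ideal.span_singleton_le_iff_mem _).2 hxm).trans_lt
      (IsLocalRing.maximalIdeal.isMaximal Q).lt_top |>.ne
  exact .of_surjective' _ Ideal.Quotient.mk_surjective

theorem hasProjectiveDimensionLT_quotSMulTop_iff [IsNoetherianRing Q] [IsLocalRing Q]
    (hxm : x ∈ IsLocalRing.maximalIdeal Q) (hx : x ∈ nonZeroDivisors Q)
    {K : Type u} [AddCommGroup K] [Module Q K] [Module.Finite Q K] (hK : IsSMulRegular K x)
    (n : ℕ) :
    HasProjectiveDimensionLT (ModuleCat.of (Q ⧸ Ideal.span {x}) (QuotSMulTop x K)) (n + 1) ↔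
      HasProjectiveDimensionLT (ModuleCat.of Q K) (n + 1) := by
  refine ⟨fun h ↦ ?_, fun _ ↦ hasProjectiveDimensionLT_quotSMulTop hx hK n⟩
  induction n generalizing K with
  | zero =>
    have := isLocalRing_quotient_span_singleton hxm
    have : Module.Finite (Q ⧸ Ideal.span {x}) (QuotSMulTop x K) :=
      .of_restrictScalars_finite Q _ _
    rw [zero_add, ← projective_iff_hasProjectiveDimensionLT_one, ← IsProjective.iff_projective]
      at h ⊢
    have : Module.FinitePresentation Q K := Module.finitePresentation_of_finite Q K
    have := (Module.free_quotSMulTop_iff_free Q K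
      (IsLocalRing.maximalIdeal_le_jacobson ⊥ hxm) hK).1 Module.free_of_flat_of_isLocalRing
    infer_instance
  | succ n ih =>
    obtain ⟨F, _, _, _, _, f, hf⟩ := Module.exists_finite_presentation Q K
    refine ((LinearMap.shortExact_shortComplexKer hf).hasProjectiveDimensionLT_X₃_iff n
      (inferInstanceAs (Projective (ModuleCat.of Q F)))).2 (ih ?_ ?_)
    · exact (Module.Flat.isSMulRegular_of_nonZeroDivisors hx).submodule _ _
    · exact ((shortExact_quotSMulTopShortComplexKer hf hK).hasProjectiveDimensionLT_X₃_iff n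
        inferInstance).1 h

theorem FiniteModulesHaveFiniteProjDim.of_quotient_span_singleton [IsNoetherianRing Q]
    [IsLocalRing Q] (hxm : x ∈ IsLocalRing.maximalIdeal Q) (hx : x ∈ nonZeroDivisors Q)
    (h : FiniteModulesHaveFiniteProjDim (Q ⧸ Ideal.span {x})) :
    FiniteModulesHaveFiniteProjDim Q := by
  intro M _
  obtain ⟨F, _, _, _, _, f, hf⟩ := Module.exists_finite_presentation Q M
  have hK : IsSMulRegular (LinearMap.ker f) x :=
    (Module.Flat.isSMulRegular_of_nonZeroDivisors hx).submodule _ _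
  have : Module.Finite (Q ⧸ Ideal.span {x}) (QuotSMulTop x (LinearMap.ker f)) :=
    .of_restrictScalars_finite Q _ _
  obtain ⟨n, hn⟩ := h (ModuleCat.of _ (QuotSMulTop x (LinearMap.ker f)))
  exact ⟨n + 2, ((LinearMap.shortExact_shortComplexKer hf).hasProjectiveDimensionLT_X₃_iff n
    (inferInstanceAs (Projective (ModuleCat.of Q F)))).2 <|
      (hasProjectiveDimensionLT_quotSMulTop_iff hxm hx hK n).1
        (hasProjectiveDimensionLT_of_ge _ n _ n.le_succ)⟩

theorem isWeaklyRegular_self_cons_iff {rs : List Q} :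
    IsWeaklyRegular Q (x :: rs) ↔ x ∈ nonZeroDivisors Q ∧
      IsWeaklyRegular (Q ⧸ Ideal.span {x}) (rs.map (Ideal.Quotient.mk (Ideal.span {x}))) := by
  rw [isWeaklyRegular_cons_iff, ← Ideal.Quotient.algebraMap_eq,
    isWeaklyRegular_map_algebraMap_iff]
  have hx : IsSMulRegular Q x ↔ x ∈ nonZeroDivisors Q := by
    rw [← isLeftRegular_iff, isLeftRegular_iff_isRegular, isRegular_iff_mem_nonZeroDivisors]
  have htop : x • (⊤ : Submodule Q Q) = Ideal.span {x} := by
    rw [← Submodule.ideal_span_singleton_smul, smul_eq_mul, Ideal.mul_top]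
  rw [hx, (Submodule.quotEquivOfEq _ _ htop).isWeaklyRegular_congr]

theorem finiteModulesHaveFiniteProjDim_of_isField (hQ : IsField Q) :
    FiniteModulesHaveFiniteProjDim Q := by
  intro M _
  let := hQ.toField
  exact ⟨1, inferInstance⟩

theorem finiteModulesHaveFiniteProjDim_of_isWeaklyRegular [IsNoetherianRing Q] [IsLocalRing Q]
    {rs : List Q} (hrs : IsWeaklyRegular Q rs)
    (hmax : Ideal.ofList rs = IsLocalRing.maximalIdeal Q) :
    FiniteModulesHaveFiniteProjDim Q := by
  induction h : rs.length generalizing Q with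
  | zero =>
    obtain rfl := List.length_eq_zero_iff.1 h
    exact finiteModulesHaveFiniteProjDim_of_isField <|
      IsLocalRing.isField_iff_maximalIdeal_eq.2 <| hmax.symm.trans Ideal.ofList_nil
  | succ n ih =>
    obtain ⟨x, rs, rfl⟩ := List.exists_cons_of_length_eq_add_one h
    obtain ⟨hx, hrs⟩ := isWeaklyRegular_self_cons_iff.1 hrs
    rw [Ideal.ofList_cons] at hmax
    have hxm : x ∈ IsLocalRing.maximalIdeal Q :=
      (Ideal.span_singleton_le_iff_mem _).1 (hmax ▸ le_sup_left)
    have := isLocalRing_quotient_span_singleton hxm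
    refine .of_quotient_span_singleton hxm hx (ih hrs ?_ (by simpa using h))
    rw [← Ideal.map_ofList, ← IsLocalRing.map_maximalIdeal_of_surjective _
      (Ideal.Quotient.mk_surjective (I := Ideal.span {x})), ← hmax, Ideal.map_sup,
      Ideal.map_quotient_self, bot_sup_eq]

theorem SelfExtDetectsFiniteProjDim.quotient_ofList [IsNoetherianRing Q]
    (hQ : SelfExtDetectsFiniteProjDim Q) {rs : List Q} (hrs : IsWeaklyRegular Q rs) :
    SelfExtDetectsFiniteProjDim (Q ⧸ Ideal.ofList rs) := by
  induction h : rs.length generalizing Q with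
  | zero =>
    obtain rfl := List.length_eq_zero_iff.1 h
    exact hQ.of_ringEquiv
      ((Ideal.quotEquivOfEq Ideal.ofList_nil).trans (RingEquiv.quotientBot Q))
  | succ n ih =>
    obtain ⟨x, rs, rfl⟩ := List.exists_cons_of_length_eq_add_one h
    obtain ⟨hx, hrs⟩ := isWeaklyRegular_self_cons_iff.1 hrs
    have e : Q ⧸ Ideal.ofList (x :: rs) ≃+* (Q ⧸ Ideal.span {x}) ⧸
        Ideal.ofList (rs.map (Ideal.Quotient.mk (Ideal.span {x}))) :=
      (Ideal.quotEquivOfEq (Ideal.ofList_cons x rs)).trans <|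
        (DoubleQuot.quotQuotEquivQuotSup _ _).symm.trans <|
          Ideal.quotEquivOfEq (Ideal.map_ofList _ rs)
    exact (ih (hQ.quotient_span_singleton hx) hrs (by simpa using h)).of_ringEquiv e

end Regular

section SAC

open Abelian

variable {R : Type u} [CommRing R]

theorem subsingleton_ext_pi (M : ModuleCat.{u} R) (k n : ℕ)
    (h : Subsingleton (Ext M (ModuleCat.of R R) n)) :
    Subsingleton (Ext M (ModuleCat.of R (Fin k → R)) n) := by
  let e : Ext M (ModuleCat.of R (Fin k → R)) n ≃+ Ext M (⨁ fun _ : Fin k ↦ ModuleCat.of R R) n :=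
    ((extFunctorObj M n).mapIso
      (ModuleCat.biproductIsoPi fun _ ↦ .of R R).symm).addCommGroupIsoToAddEquiv
  exact (e.trans (Ext.addEquivBiproduct M (Limits.biproduct.isBilimit _) n)).injective.subsingleton

theorem hasProjectiveDimensionLT_of_subsingleton_ext_ring [IsNoetherianRing R]
    {M : ModuleCat.{u} R} [Module.Finite R M] {n : ℕ} [HasProjectiveDimensionLT M (n + 1)]
    (hM : Subsingleton (Ext M (ModuleCat.of R R) n)) : HasProjectiveDimensionLT M n := by
  refine ModuleCat.hasProjectiveDimensionLT_of_forall_finite M n fun L _ ↦ ?_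
  obtain ⟨k, f, hf⟩ := Module.Finite.exists_fin' R L
  have := subsingleton_ext_pi M k n hM
  have := HasProjectiveDimensionLT.subsingleton M (n + 1) (n + 1) le_rfl
    (ModuleCat.of R (LinearMap.ker f))
  refine subsingleton_of_forall_eq 0 fun y ↦ ?_
  obtain ⟨z, rfl⟩ := Ext.covariant_sequence_exact₃ M (LinearMap.shortExact_shortComplexKer hf) y
    rfl (Subsingleton.elim _ _)
  rw [Subsingleton.elim z 0, Ext.zero_comp]

theorem projective_of_hasProjectiveDimensionLT_of_subsingleton_ext_ring [IsNoetherianRing R]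
    {M : ModuleCat.{u} R} [Module.Finite R M] {n : ℕ} (hn : HasProjectiveDimensionLT M (n + 1))
    (hM : ∀ i, Subsingleton (Ext M (ModuleCat.of R R) (i + 1))) : Projective M := by
  induction n with
  | zero => exact projective_iff_hasProjectiveDimensionLT_one.2 hn
  | succ n ih => exact ih (hasProjectiveDimensionLT_of_subsingleton_ext_ring (hM n))

theorem subsingleton_extGroup_succ_iff {R : Type} [CommRing R] (M N : ModuleCat.{0} R) (n : ℕ) :
    Subsingleton (ExtGroup R M N (n + 1)) ↔ Subsingleton (Abelian.Ext M N (n + 1)) := by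
  let P : ProjectiveResolution M := ProjectiveResolution.of M
  have subsingleton_iff_extends : Subsingleton (ExtGroup R M N (n + 1)) ↔
      ∀ f : P.complex.X (n + 1) ⟶ N, P.complex.d (n + 2) (n + 1) ≫ f = 0 →
        ∃ g : P.complex.X n ⟶ N, P.complex.d (n + 1) n ≫ g = f := by
    rw [(P.isoExt (R := R) (n + 1) N).toLinearEquiv.toEquiv.subsingleton_congr,
      ← ModuleCat.isZero_iff_subsingleton, ← HomologicalComplex.exactAt_iff_isZero_homology,
      HomologicalComplex.exactAt_iff' _ n (n + 1) (n + 2) (by simp) (by simp),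
      ShortComplex.moduleCat_exact_iff]
    exact Iff.rfl
  rw [subsingleton_iff_extends]
  constructor
  · intro h
    refine subsingleton_of_forall_eq 0 fun x ↦ ?_
    obtain ⟨f, hf, rfl⟩ := P.extMk_surjective x (n + 2) rfl
    exact (P.extMk_eq_zero_iff f (n + 2) rfl hf n rfl).2 (h f hf)
  · intro h f hf
    exact (P.extMk_eq_zero_iff f (n + 2) rfl hf n rfl).1 (Subsingleton.elim _ _)

theorem SelfExtDetectsFiniteProjDim.sac {R : Type} [CommRing R] [IsNoetherianRing R]
    (hR : SelfExtDetectsFiniteProjDim R) : SAC R := by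
  intro M _ hMR ⟨m, hMM⟩ i hi
  obtain ⟨n, hn⟩ := hR M ⟨m, fun j hj ↦ by
    obtain ⟨j, rfl⟩ := Nat.exists_eq_add_of_le' (Nat.one_le_of_lt hj)
    exact (subsingleton_extGroup_succ_iff M M j).1 (hMM _ hj)⟩
  have : Projective M := projective_of_hasProjectiveDimensionLT_of_subsingleton_ext_ring
    (hasProjectiveDimensionLT_of_ge M n _ n.le_succ)
    fun j ↦ (subsingleton_extGroup_succ_iff M _ j).1 (hMR _ j.succ_pos)
  obtain ⟨j, rfl⟩ := Nat.exists_eq_add_of_le' hi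
  exact (subsingleton_extGroup_succ_iff M M j).2 (Ext.subsingleton_of_projective _ _ _)

open IsLocalRing in
theorem faithfullyFlat_adicCompletion_maximalIdeal (R : Type u) [CommRing R] [IsNoetherianRing R]
    [IsLocalRing R] : Module.FaithfullyFlat R (AdicCompletion (maximalIdeal R) R) :=
  .of_flat_of_isLocalHom

end SAC

theorem stmt_16_general {R S Q : Type} [CommRing R] [CommRing S] [CommRing Q]
    [IsNoetherianRing R] [IsNoetherianRing Q] [Algebra R S] [Module.FaithfullyFlat R S]
    (hQ : SelfExtDetectsFiniteProjDim Q) {f : List Q}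
    (hf : RingTheory.Sequence.IsWeaklyRegular Q f) (e : S ≃+* Q ⧸ Ideal.ofList f) : SAC R := by
  have : IsNoetherianRing S := isNoetherianRing_of_ringEquiv _ e.symm
  exact ((hQ.quotient_ofList hf).of_ringEquiv e).of_faithfullyFlat.sac

/-- Every local complete intersection satisfies (SAC): if the Noetherian local ring `R`
has completion isomorphic to `Q/(f₁,…,f_c)` with `Q` a regular local ring (Noetherian
local with maximal ideal generated by a regular sequence) and `f₁,…,f_c` a
`Q`-regular sequence, then `R` satisfies (SAC). -/
theorem stmt_16 (R : Type) [CommRing R] [IsNoetherianRing R] [IsLocalRing R]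
    (hCI : ∃ (Q : Type) (_ : CommRing Q) (_ : IsNoetherianRing Q) (_ : IsLocalRing Q),
      (∃ g : List Q, RingTheory.Sequence.IsRegular Q g ∧
        Ideal.span {y | y ∈ g} = IsLocalRing.maximalIdeal Q) ∧
      ∃ f : List Q, RingTheory.Sequence.IsRegular Q f ∧
        Nonempty ((AdicCompletion (IsLocalRing.maximalIdeal R) R) ≃+*
          (Q ⧸ Ideal.span {y | y ∈ f})) ) :
    SAC R := by
  obtain ⟨Q, _, _, _, ⟨g, hg, hgm⟩, f, hf, ⟨e⟩⟩ := hCI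
  have := faithfullyFlat_adicCompletion_maximalIdeal R
  have hQ := finiteModulesHaveFiniteProjDim_of_isWeaklyRegular hg.toIsWeaklyRegular hgm
  exact stmt_16_general hQ.selfExtDetectsFiniteProjDim hf.toIsWeaklyRegular e
end
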